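/- Let Ω ⊆ ℝ² be a bounded open convex set, and let E ⊆ closure(Ω) be a finite union of closed convex sets with a prescribed boundary intersection with ∂Ω. Suppose ψ ∈ BV(B), where B is an open ball containing closure(Ω), satisfies ψ = 0 a.e. in a closed set F₁ ⊆ closure(Ω) that is the closure of a piecewise Lipschitz set. Let l be a segment in ∂(conv(F₁)) \ ∂F₁ and U the open region enclosed between ∂F₁ and l, and define ψ′ = 0 on U and ψ′ = ψ elsewhere. Then 𝒜(ψ′; B) − |F₁ ∪ closure(U)| ≤ 𝒜(ψ; B) − |F₁|, where 𝒜 denotes the relaxed area functional and |·| Lebesgue measure. -/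

import Mathlib

open Set Filter MeasureTheory Bornology
open scoped Topology ENNReal NNReal

noncomputable abbrev E2 := EuclideanSpace ℝ (Fin 2)

/-- Divergence of a vector field on ℝ². -/
noncomputable def diver (g : E2 → E2) (x : E2) : ℝ :=
  LinearMap.trace ℝ E2 (fderiv ℝ g x : E2 →ₗ[ℝ] E2)

/-- The `L¹`-relaxed area functional (dual formulation). -/
noncomputable def relaxedArea (U : Set E2) (ψ : E2 → ℝ) : ℝ≥0∞ :=
  ⨆ (g : E2 → E2) (h : E2 → ℝ) (_ : ContDiff ℝ 1 g) (_ : ContDiff ℝ 1 h)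
    (_ : tsupport g ⊆ U) (_ : tsupport h ⊆ U)
    (_ : ∀ x, ‖g x‖ ^ 2 + h x ^ 2 ≤ 1),
    ENNReal.ofReal (∫ x in U, (ψ x * diver g x + h x))

/-- A bounded open set whose boundary is a Lipschitz Jordan curve (our rendering of
"Lipschitz open set"). -/
def LipschitzJordanDomain (V : Set E2) : Prop :=
  IsOpen V ∧ IsBounded V ∧
  ∃ (γ : ℝ → E2) (L : ℝ≥0), LipschitzWith L γ ∧ Function.Periodic γ 1 ∧
    Set.InjOn γ (Set.Ico 0 1) ∧ γ '' Set.Icc 0 1 = frontier V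

/-- Piecewise Lipschitz set: a finite union of Lipschitz open sets. -/
def PiecewiseLipschitz (S : Set E2) : Prop :=
  ∃ (n : ℕ) (A : Fin n → Set E2), (∀ i, LipschitzJordanDomain (A i)) ∧ S = ⋃ i, A i

theorem arc_no_sep (γ : ℝ → ℂ) (hγ : Continuous γ) (u v : ℝ) (huv : u ≤ v)
    (hinj : Set.InjOn γ (Icc u v)) (Z : Set ℂ) (hZo : IsOpen Z) (hZb : IsBounded Z)
    (hZne : Z.Nonempty) (hZT : ∀ t ∈ Icc u v, γ t ∉ Z) (hfr : frontier Z ⊆ γ '' Icc u v) :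
    False := by
  obtain ⟨z₀, hz₀⟩ := hZne
  -- logarithm along the arc
  obtain ⟨lam, ⟨-, hlam⟩, -⟩ := Complex.isCoveringMapOn_exp.existsUnique_continuousMap_lifts
    (A := ℝ) (⟨fun t => γ (projIcc u v huv t) - z₀, by fun_prop⟩ : C(ℝ, ℂ)) (a₀ := u)
    (e₀ := Complex.log (γ (projIcc u v huv u) - z₀))
    (Complex.exp_log (by
      intro h
      exact hZT _ (projIcc u v huv u).2 (by rwa [sub_eq_zero.mp h])))
    (fun t => by
      intro h
      have h : γ (projIcc u v huv t) - z₀ = 0 := h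
      exact hZT _ (projIcc u v huv t).2 (by rwa [sub_eq_zero.mp h]))
  have hemb : Topology.IsClosedEmbedding (fun t : Icc u v => γ t) := by
    apply Continuous.isClosedEmbedding (by fun_prop)
    intro a b h
    exact Subtype.ext (hinj a.2 b.2 h)
  obtain ⟨L, hL⟩ := ContinuousMap.exists_extension' hemb
    (⟨fun t : Icc u v => lam t, by fun_prop⟩ : C(Icc u v, ℂ))
  have hLT : ∀ z ∈ γ '' Icc u v, Complex.exp (L z) = z - z₀ := by
    rintro _ ⟨t, ht, rfl⟩
    have h1 : L (γ t) = lam t := congrFun hL ⟨t, ht⟩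
    have h2 := congrFun hlam t
    simp only [Function.comp_apply, ContinuousMap.coe_mk, projIcc_of_mem huv ht] at h2
    rw [h1, h2]
  classical
  let F : ℂ → ℂ := fun z => if z ∈ closure Z then Complex.exp (L z) else z - z₀
  have hFc : Continuous F := by
    apply Continuous.if
    · intro a ha
      have : a ∈ frontier Z := frontier_closure_subset ha
      exact hLT a (hfr this)
    · fun_prop
    · fun_prop
  have hF0 : ∀ z, F z ≠ 0 := by
    intro z
    by_cases h : z ∈ closure Z
    · simp [F, h]
    · simp only [F, h, if_false]
      intro h'
      apply h
      rw [sub_eq_zero.mp h']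
      exact subset_closure hz₀
  obtain ⟨M, ⟨-, hM⟩, -⟩ := Complex.isCoveringMapOn_exp.existsUnique_continuousMap_lifts
    (A := ℂ) (⟨F, hFc⟩ : C(ℂ, ℂ)) (a₀ := 0)
    (e₀ := Complex.log (F 0)) (Complex.exp_log (hF0 0)) (fun z => hF0 z)
  obtain ⟨r, hr0, hr⟩ := hZb.closure.subset_ball_lt 0 z₀
  have hFr : ∀ θ : ℝ, Complex.exp (M (z₀ + r * Complex.exp (θ * Complex.I))) =
      r * Complex.exp (θ * Complex.I) := by
    intro θ
    have h1 := congrFun hM (z₀ + r * Complex.exp (θ * Complex.I))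
    simp only [Function.comp_apply, ContinuousMap.coe_mk] at h1
    rw [h1]
    have : z₀ + r * Complex.exp (θ * Complex.I) ∉ closure Z := by
      intro h
      have := hr h
      simp [abs_of_pos hr0, Complex.norm_exp_ofReal_mul_I] at this
    simp [F, this]
  let D : ℝ → ℂ := fun θ => M (z₀ + r * Complex.exp (θ * Complex.I)) - θ * Complex.I
  have hDc : Continuous D := by fun_prop
  have hDe : ∀ θ, Complex.exp (D θ) = r := by
    intro θ
    simp only [D]
    rw [Complex.exp_sub, hFr]
    field_simp
  have hD : D = fun _ => D 0 := by
    apply Complex.isCoveringMap_exp.eq_of_comp_eq hDc continuous_const _ 0 rfl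
    funext θ
    simp [hDe]
  have h2 := congrFun hD (2 * Real.pi)
  simp only [D] at h2
  push_cast at h2
  rw [Complex.exp_two_pi_mul_I] at h2
  simp [Real.pi_ne_zero] at h2

theorem preconn_frontier {α : Type*} [TopologicalSpace α] {S N : Set α} (hS : IsPreconnected S)
    (h : Disjoint S (frontier N)) : S ⊆ interior N ∨ S ⊆ (closure N)ᶜ := by
  apply IsPreconnected.subset_or_subset isOpen_interior isClosed_closure.isOpen_compl _ _ hS
  · rw [disjoint_left]
    intro x hx hx2
    exact hx2 (subset_closure (interior_subset hx))
  · intro x hx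
    by_cases h1 : x ∈ closure N
    · left
      by_contra h2
      exact disjoint_left.mp h hx ⟨h1, h2⟩
    · exact Or.inr h1

theorem convex_rect (a b c d : ℝ) : Convex ℝ (Icc a b ×ℂ Icc c d) := by
  have h1 : Convex ℝ (Complex.reLm ⁻¹' Icc a b) := (convex_Icc a b).linear_preimage _
  have h2 : Convex ℝ (Complex.imLm ⁻¹' Icc c d) := (convex_Icc c d).linear_preimage _
  exact h1.inter h2

/-- A set that cannot be cut by the boundary of a compact convex set. -/
def RectProp (N : Set ℂ) : Prop :=
  ∀ K : Set ℂ, IsCompact K → Convex ℝ K → Disjoint N (frontier K) →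
    N ∩ interior K = ∅ ∨ N ⊆ interior K

theorem rectProp_of_preconnected {N : Set ℂ} (hN : IsPreconnected N) : RectProp N := by
  intro K hK _ hd
  by_cases h : (N ∩ interior K).Nonempty
  · right
    by_contra h2
    obtain ⟨z, hz, hzK⟩ := not_subset.mp h2
    have hcov : N ⊆ interior K ∪ Kᶜ := by
      intro w hw
      by_cases hwK : w ∈ K
      · left
        by_contra h3
        exact disjoint_left.mp hd hw ⟨subset_closure hwK, h3⟩
      · exact Or.inr hwK
    have hz' : z ∈ Kᶜ := (hcov hz).resolve_left hzK
    obtain ⟨w, _, hw1, hw2⟩ := hN _ _ isOpen_interior hK.isClosed.isOpen_compl hcov h ⟨z, hz, hz'⟩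
    exact hw2 (interior_subset hw1)
  · left
    exact not_nonempty_iff_eq_empty.mp h

theorem rectProp_of_jordan {N : Set ℂ} (hNo : IsOpen N) (hNb : IsBounded N) (γ : ℝ → ℂ)
    (hγ : Continuous γ) (hper : Function.Periodic γ 1) (hinj : Set.InjOn γ (Ico 0 1))
    (him : γ '' Icc 0 1 = frontier N) : RectProp N := by
  intro K hK hKc hd
  by_contra hcon
  push Not at hcon
  obtain ⟨⟨z, hzN, hzK⟩, hcon2⟩ := hcon
  obtain ⟨z', hz'N, hz'K⟩ := not_subset.mp hcon2
  have hmemK : ∀ w ∈ N, w ∈ K → w ∈ interior K := by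
    intro w hw hwK
    by_contra h3
    exact disjoint_left.mp hd hw ⟨subset_closure hwK, h3⟩
  have hz2K : z' ∉ K := fun h => hz'K (hmemK _ hz'N h)
  -- a point of the curve outside K
  have hout : ∃ w ∈ frontier N, w ∉ K := by
    have hpre : IsPreconnected ((fun t : ℝ => z + t • (z' - z)) '' Ici 1) :=
      isPreconnected_Ici.image _ (by fun_prop)
    have hne : z' - z ≠ 0 := by
      intro h
      rw [sub_eq_zero.mp h] at hz'K
      exact hz'K hzK
    have : (((fun t : ℝ => z + t • (z' - z)) '' Ici 1) ∩ frontier N).Nonempty := by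
      by_contra hemp
      have hdis : Disjoint ((fun t : ℝ => z + t • (z' - z)) '' Ici 1) (frontier N) :=
        disjoint_iff_inter_eq_empty.mpr (not_nonempty_iff_eq_empty.mp hemp)
      rcases preconn_frontier hpre hdis with hA | hA
      · obtain ⟨r, hr0, hr⟩ := hNb.subset_ball_lt 0 z
        have := hr (interior_subset (hA ⟨max 1 (r / ‖z' - z‖), by simp, rfl⟩))
        simp only [Metric.mem_ball, dist_self_add_left, norm_smul, Real.norm_eq_abs] at this
        have hp : 0 < ‖z' - z‖ := norm_pos_iff.mpr hne
        have h1 : r / ‖z' - z‖ ≤ |max 1 (r / ‖z' - z‖)| := (le_max_right _ _).trans (le_abs_self _)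
        rw [div_le_iff₀ hp] at h1
        linarith
      · exact hA ⟨1, by simp, by simp⟩ (subset_closure hz'N)
    obtain ⟨_, ⟨t, ht, rfl⟩, hw⟩ := this
    refine ⟨_, hw, ?_⟩
    intro hK'
    apply hz2K
    have ht : (1:ℝ) ≤ t := ht
    have h0 : (0:ℝ) < t := by linarith
    have := hKc (interior_subset hzK) hK' (a := 1 - t⁻¹) (b := t⁻¹)
      (by rw [sub_nonneg]; exact inv_le_one_of_one_le₀ ht) (by positivity) (by ring)
    convert this using 1
    rw [smul_add, smul_smul, inv_mul_cancel₀ h0.ne', one_smul, sub_smul, one_smul]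
    ring
  obtain ⟨w, hwf, hwK⟩ := hout
  rw [← him] at hwf
  obtain ⟨u₀, -, rfl⟩ := hwf
  have hnear : ∀ᶠ u in 𝓝 u₀, γ u ∈ Kᶜ :=
    hγ.continuousAt.eventually (hK.isClosed.isOpen_compl.mem_nhds hwK)
  obtain ⟨ε', hε', hε⟩ := Metric.eventually_nhds_iff.mp hnear
  set ε := min (ε' / 2) (1 / 4) with hεdef
  have hε0 : 0 < ε := by positivity
  have hεε : ε < ε' := lt_of_le_of_lt (min_le_left _ _) (by linarith)
  have hε4 : ε ≤ 1 / 4 := min_le_right _ _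
  have hinj' : Set.InjOn γ (Ico u₀ (u₀ + 1)) := by
    intro x hx y hy hxy
    have hf : ∀ t, γ (Int.fract t) = γ t := by
      intro t
      rw [Int.fract]
      simpa using hper.sub_int_mul_eq (x := t) ⌊t⌋
    have h1 : Int.fract x = Int.fract y := by
      apply hinj ⟨Int.fract_nonneg _, Int.fract_lt_one _⟩ ⟨Int.fract_nonneg _, Int.fract_lt_one _⟩
      rw [hf, hf, hxy]
    obtain ⟨k, hk⟩ := Int.fract_eq_fract.mp h1
    have h2 : (k : ℝ) < 1 := by rw [← hk]; linarith [hx.2, hy.1]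
    have h3 : (-1 : ℝ) < k := by rw [← hk]; linarith [hx.1, hy.2]
    have h4 : k < 1 := by exact_mod_cast h2
    have h5 : -1 < k := by exact_mod_cast h3
    have h6 : k = 0 := by omega
    rw [h6] at hk
    simp at hk
    linarith
  have hZfr : ∀ x ∈ frontier (N ∩ interior K), x ∈ frontier N ∧ x ∈ K := by
    intro x hx
    have hxc : x ∈ closure (N ∩ interior K) := hx.1
    have hxK : x ∈ K := by
      have := closure_mono (inter_subset_right.trans interior_subset) hxc
      rwa [hK.isClosed.closure_eq] at this
    have hxN : x ∈ closure N := closure_mono inter_subset_left hxc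
    refine ⟨⟨hxN, ?_⟩, hxK⟩
    rw [hNo.interior_eq]
    intro h
    apply hx.2
    rw [(hNo.inter isOpen_interior).interior_eq]
    exact ⟨h, hmemK _ h hxK⟩
  refine arc_no_sep γ hγ (u₀ + ε) (u₀ + 1 - ε) (by linarith)
    (hinj'.mono (Icc_subset_Ico_iff (by linarith) |>.mpr ⟨by linarith, by linarith⟩)) (N ∩ interior K)
    (hNo.inter isOpen_interior) (hNb.subset inter_subset_left) ⟨z, hzN, hzK⟩ ?_ ?_
  · intro t _ ht
    obtain ⟨t', ht', hte⟩ := hper.exists_mem_Ico₀ one_pos t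
    have : γ t ∈ frontier N := by
      rw [← him, hte]
      exact ⟨t', ⟨ht'.1, ht'.2.le⟩, rfl⟩
    rw [hNo.frontier_eq] at this
    exact this.2 ht.1
  · intro x hx
    obtain ⟨h1, h2⟩ := hZfr x hx
    rw [← him] at h1
    obtain ⟨t, _, rfl⟩ := h1
    obtain ⟨t', ht', hte⟩ := hper.exists_mem_Ico one_pos t u₀
    rw [hte] at h2 ⊢
    refine ⟨t', ⟨?_, ?_⟩, rfl⟩
    · by_contra h
      push Not at h
      refine hε (y := t') ?_ h2
      rw [Real.dist_eq, abs_lt]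
      constructor <;> linarith [ht'.1]
    · by_contra h
      push Not at h
      refine hε (y := t' - 1) ?_ (by rwa [hper.sub_eq])
      rw [Real.dist_eq, abs_lt]
      constructor <;> linarith [ht'.2]

theorem countable_isolated {N : Set ℂ} (hNo : IsOpen N) (hN : RectProp N) :
    {s : ℝ | ∃ y : ℝ, (⟨s, y⟩ : ℂ) ∈ closure N ∧ ∃ ε > 0, ∀ y', |y' - y| < ε → y' ≠ y →
      (⟨s, y'⟩ : ℂ) ∉ closure N}.Countable := by
  let X : ℚ × ℚ → Set ℝ := fun q => {s | ∃ y, (q.1 : ℝ) < y ∧ y < q.2 ∧ (⟨s, y⟩ : ℂ) ∈ closure N ∧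
    ∀ y' : ℝ, (q.1 : ℝ) ≤ y' → y' ≤ q.2 → y' ≠ y → (⟨s, y'⟩ : ℂ) ∉ closure N}
  have hsub : {s : ℝ | ∃ y : ℝ, (⟨s, y⟩ : ℂ) ∈ closure N ∧ ∃ ε > 0, ∀ y', |y' - y| < ε → y' ≠ y →
      (⟨s, y'⟩ : ℂ) ∉ closure N} ⊆ ⋃ q, X q := by
    rintro s ⟨y, hy, ε, hε, h⟩
    obtain ⟨c, hc1, hc2⟩ := exists_rat_btwn (show y - ε < y by linarith)
    obtain ⟨d, hd1, hd2⟩ := exists_rat_btwn (show y < y + ε by linarith)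
    refine mem_iUnion.mpr ⟨(c, d), y, hc2, hd1, hy, ?_⟩
    intro y' h1 h2 h3
    refine h y' ?_ h3
    simp only at h1 h2
    rw [abs_lt]
    constructor <;> linarith
  refine Countable.mono hsub (countable_iUnion fun q => ?_)
  obtain ⟨c, d⟩ := q
  have hslice : Continuous (fun p : ℝ × ℝ => (⟨p.1, p.2⟩ : ℂ)) :=
    Complex.equivRealProdCLM.symm.continuous
  -- slices over X do not meet N
  have hXN : ∀ s ∈ X (c, d), ∀ y : ℝ, (c : ℝ) ≤ y → y ≤ d → (⟨s, y⟩ : ℂ) ∉ N := by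
    rintro s ⟨y₀, h1, h2, h3, h4⟩ y hcy hyd hyN
    simp only at h1 h2 h4
    by_cases hy : y = y₀
    · subst hy
      have hc : Continuous (fun t : ℝ => (⟨s, t⟩ : ℂ)) := hslice.comp (Continuous.prodMk_right s)
      have hev : ∀ᶠ t in 𝓝 y, (⟨s, t⟩ : ℂ) ∈ N := hc.continuousAt.eventually (hNo.mem_nhds hyN)
      have hev2 : ∀ᶠ t in 𝓝[≠] y, (⟨s, t⟩ : ℂ) ∈ N ∧ t ∈ Ioo (c : ℝ) d ∧ t ≠ y :=
        (hev.filter_mono nhdsWithin_le_nhds).and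
          (inter_mem (mem_nhdsWithin_of_mem_nhds (Ioo_mem_nhds h1 h2)) self_mem_nhdsWithin)
      obtain ⟨t, ht1, ht2, ht3⟩ := hev2.exists
      exact h4 t ht2.1.le ht2.2.le ht3 (subset_closure ht1)
    · exact h4 y hcy hyd hy (subset_closure hyN)
  have key : X (c, d) ⊆ {x ∈ X (c, d) | 𝓝[X (c, d) ∩ Ioi x] x = ⊥} ∪
      {x ∈ X (c, d) | 𝓝[X (c, d) ∩ Iio x] x = ⊥} := by
    intro s hs
    by_contra hcon
    have hR : 𝓝[X (c, d) ∩ Ioi s] s ≠ ⊥ := fun h => hcon (Or.inl ⟨hs, h⟩)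
    have hL : 𝓝[X (c, d) ∩ Iio s] s ≠ ⊥ := fun h => hcon (Or.inr ⟨hs, h⟩)
    obtain ⟨y, h1, h2, h3, h4⟩ := id hs
    simp only at h1 h2 h4
    have hcd : (c : ℝ) < d := h1.trans h2
    -- bottom and top avoid N
    have hbt : ∀ᶠ s' in 𝓝 s, (⟨s', c⟩ : ℂ) ∈ (closure N)ᶜ ∧ (⟨s', d⟩ : ℂ) ∈ (closure N)ᶜ := by
      have hc1 : Continuous (fun t : ℝ => (⟨t, c⟩ : ℂ)) := hslice.comp (Continuous.prodMk_left (c:ℝ))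
      have hc2 : Continuous (fun t : ℝ => (⟨t, d⟩ : ℂ)) := hslice.comp (Continuous.prodMk_left (d:ℝ))
      exact (hc1.continuousAt.eventually (isClosed_closure.isOpen_compl.mem_nhds
        (h4 c le_rfl hcd.le h1.ne))).and (hc2.continuousAt.eventually
        (isClosed_closure.isOpen_compl.mem_nhds (h4 d hcd.le le_rfl h2.ne')))
    obtain ⟨η, hη, hηb⟩ := Metric.eventually_nhds_iff.mp hbt
    have rect : ∀ s₁ ∈ X (c, d), ∀ s₂ ∈ X (c, d), s₁ < s₂ → s - η < s₁ → s₂ < s + η →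
        N ∩ (Ioo s₁ s₂ ×ℂ Ioo (c:ℝ) d) = ∅ ∨ N ⊆ (Ioo s₁ s₂ ×ℂ Ioo (c:ℝ) d) := by
      intro s₁ hs1 s₂ hs2 h12 ha hb
      have := hN (Icc s₁ s₂ ×ℂ Icc (c:ℝ) d) (isCompact_Icc.reProdIm isCompact_Icc)
        (convex_rect _ _ _ _) ?_
      · rwa [Complex.interior_reProdIm, interior_Icc, interior_Icc] at this
      · rw [disjoint_left]
        intro z hz hzf
        rw [Complex.frontier_reProdIm, frontier_Icc h12.le, frontier_Icc hcd.le,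
          closure_Icc, closure_Icc] at hzf
        rcases hzf with ⟨hz1, hz2⟩ | ⟨hz1, hz2⟩
        · have hz1 : z.re ∈ Icc s₁ s₂ := hz1
          have hd : dist z.re s < η := by
            rw [Real.dist_eq, abs_lt]
            constructor <;> linarith [hz1.1, hz1.2]
          have := hηb hd
          rcases hz2 with hz2 | hz2
          · exact this.1 (by rw [← hz2]; exact subset_closure hz)
          · have hz2 : z.im = d := hz2
            exact this.2 (by rw [← hz2]; exact subset_closure hz)
        · have hz2 : z.im ∈ Icc (c:ℝ) d := hz2
          rcases hz1 with hz1 | hz1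
          · exact hXN s₁ hs1 z.im hz2.1 hz2.2 (by rw [← hz1]; exact hz)
          · have hz1 : z.re = s₂ := hz1
            exact hXN s₂ hs2 z.im hz2.1 hz2.2 (by rw [← hz1]; exact hz)
    have hRp : ∀ r > s, ∃ x ∈ X (c, d), s < x ∧ x < r := by
      intro r hr
      have : (𝓝[X (c, d) ∩ Ioi s] s).NeBot := ⟨hR⟩
      have h5 : ∀ᶠ x in 𝓝[X (c, d) ∩ Ioi s] s, x ∈ X (c, d) ∩ Ioi s ∧ x < r :=
        inter_mem self_mem_nhdsWithin (mem_nhdsWithin_of_mem_nhds (Iio_mem_nhds hr))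
      obtain ⟨x, hx1, hx2⟩ := h5.exists
      exact ⟨x, hx1.1, hx1.2, hx2⟩
    have hLp : ∀ r < s, ∃ x ∈ X (c, d), r < x ∧ x < s := by
      intro r hr
      have : (𝓝[X (c, d) ∩ Iio s] s).NeBot := ⟨hL⟩
      have h5 : ∀ᶠ x in 𝓝[X (c, d) ∩ Iio s] s, x ∈ X (c, d) ∩ Iio s ∧ r < x :=
        inter_mem self_mem_nhdsWithin (mem_nhdsWithin_of_mem_nhds (Ioi_mem_nhds hr))
      obtain ⟨x, hx1, hx2⟩ := h5.exists
      exact ⟨x, hx1.1, hx2, hx1.2⟩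
    -- points of N near (s,y)
    have hpt : ∀ s₁ s₂, s₁ < s → s < s₂ → ∃ z ∈ N, z.re ∈ Ioo s₁ s₂ ∧ z.im ∈ Ioo (c:ℝ) d := by
      intro s₁ s₂ hs1 hs2
      have ho : IsOpen (Ioo s₁ s₂ ×ℂ Ioo (c:ℝ) d) := isOpen_Ioo.reProdIm isOpen_Ioo
      obtain ⟨z, hz1, hz2⟩ := mem_closure_iff.mp h3 _ ho ⟨⟨hs1, hs2⟩, ⟨h1, h2⟩⟩
      exact ⟨z, hz2, hz1.1, hz1.2⟩
    obtain ⟨a, haX, ha1, ha2⟩ := hLp (s - η) (by linarith)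
    obtain ⟨b, hbX, hb1, hb2⟩ := hRp (s + η) (by linarith)
    obtain ⟨z, hzN, hz1, hz2⟩ := hpt a b ha2 hb1
    have hzs : z.re ≠ s := by
      intro h
      exact hXN s hs z.im hz2.1.le hz2.2.le (by rw [← h]; exact hzN)
    rcases lt_or_gt_of_ne hzs with hlt | hgt
    · have hNs : N ⊆ Ioo a s ×ℂ Ioo (c:ℝ) d := by
        rcases rect a haX s hs ha2 ha1 (by linarith) with h | h
        · exact absurd (show z ∈ N ∩ (Ioo a s ×ℂ Ioo (c:ℝ) d) from ⟨hzN, ⟨hz1.1, hlt⟩, hz2⟩)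
            (by rw [h]; simp)
        · exact h
      obtain ⟨a', ha'X, ha'1, ha'2⟩ := hLp (max z.re a) (max_lt hlt ha2)
      have ha'a := (le_max_right _ _).trans_lt ha'1
      have ha'z := (le_max_left _ _).trans_lt ha'1
      rcases rect a' ha'X s hs ha'2 (by linarith) (by linarith) with h | h
      · obtain ⟨w, hwN, hw1, hw2⟩ := hpt a' b ha'2 hb1
        have : w ∈ N ∩ (Ioo a' s ×ℂ Ioo (c:ℝ) d) := ⟨hwN, ⟨hw1.1, (hNs hwN).1.2⟩, hw2⟩
        rw [h] at this
        exact this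
      · have := (h hzN).1.1
        linarith
    · have hNs : N ⊆ Ioo s b ×ℂ Ioo (c:ℝ) d := by
        rcases rect s hs b hbX hb1 (by linarith) hb2 with h | h
        · exact absurd (show z ∈ N ∩ (Ioo s b ×ℂ Ioo (c:ℝ) d) from ⟨hzN, ⟨hgt, hz1.2⟩, hz2⟩)
            (by rw [h]; simp)
        · exact h
      obtain ⟨b', hb'X, hb'1, hb'2⟩ := hRp (min z.re b) (lt_min hgt hb1)
      have hb'a := hb'2.trans_le (min_le_right _ _)
      have hb'z := hb'2.trans_le (min_le_left _ _)
      rcases rect s hs b' hb'X hb'1 (by linarith) (by linarith) with h | h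
      · obtain ⟨w, hwN, hw1, hw2⟩ := hpt a b' ha2 hb'1
        have : w ∈ N ∩ (Ioo s b' ×ℂ Ioo (c:ℝ) d) := ⟨hwN, ⟨(hNs hwN).1.1, hw1.2⟩, hw2⟩
        rw [h] at this
        exact this
      · have := (h hzN).1.2
        linarith
  exact (countable_setOfPred_isolated_right_within.union
    countable_setOfPred_isolated_left_within).mono key

theorem ae_finite_fiber (x : ℝ → ℝ) (L : ℝ≥0) (hx : LipschitzWith L x) :
    ∀ᵐ s : ℝ, {u ∈ Icc (0:ℝ) 1 | x u = s}.Finite := by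
  let Nk : ℕ → ℝ → ℝ≥0∞ := fun k s => ∑ i ∈ Finset.range (k + 1 + 1),
    (Metric.closedBall (x (i / ((k:ℝ) + 1))) (L / ((k:ℝ) + 1))).indicator 1 s
  have hmeas : ∀ k, Measurable (Nk k) := by
    intro k
    apply Finset.measurable_fun_sum
    intro i _
    exact measurable_one.indicator Metric.isClosed_closedBall.measurableSet
  have hIntg : ∀ k, ∫⁻ s, Nk k s ≤ ENNReal.ofReal (4 * L) := by
    intro k
    simp only [Nk]
    rw [lintegral_finsetSum _ (fun i _ =>
      measurable_one.indicator Metric.isClosed_closedBall.measurableSet)]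
    simp only [lintegral_indicator_one Metric.isClosed_closedBall.measurableSet,
      Real.volume_closedBall, Finset.sum_const, Finset.card_range, nsmul_eq_mul]
    rw [← ENNReal.ofReal_natCast, ← ENNReal.ofReal_mul (by positivity)]
    apply ENNReal.ofReal_le_ofReal
    push_cast
    have hk : (0:ℝ) ≤ k := by positivity
    have : ((k:ℝ) + 1 + 1) * (2 * (L / (k + 1))) = (2 * L) * ((k + 2) / (k + 1)) := by
      field_simp; ring
    rw [this]
    have h2 : ((k:ℝ) + 2) / (k + 1) ≤ 2 := by
      rw [div_le_iff₀ (by positivity)]; linarith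
    have h3 : (0:ℝ) ≤ 2 * L := by positivity
    nlinarith
  have hfatou : ∫⁻ s, liminf (fun k => Nk k s) atTop ≤ ENNReal.ofReal (4 * L) := by
    refine (lintegral_liminf_le hmeas).trans ?_
    refine liminf_le_of_le (by isBoundedDefault) ?_
    intro b hb
    obtain ⟨k, hk⟩ := hb.exists
    exact hk.trans (hIntg k)
  have hfin : ∀ᵐ s, liminf (fun k => Nk k s) atTop < ∞ :=
    ae_lt_top (Measurable.liminf hmeas) (ne_top_of_le_ne_top ENNReal.ofReal_ne_top hfatou)
  filter_upwards [hfin] with s hs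
  by_contra hinf
  have hinf : {u ∈ Icc (0:ℝ) 1 | x u = s}.Infinite := hinf
  have hge : ∀ m : ℕ, (m : ℝ≥0∞) ≤ liminf (fun k => Nk k s) atTop := by
    intro m
    obtain ⟨T, hT, hTm⟩ := hinf.exists_subset_card_eq m
    have hev : ∀ᶠ k : ℕ in atTop, ∀ u ∈ T, ∀ v ∈ T, u ≠ v →
        ⌊u * ((k:ℝ) + 1)⌋₊ ≠ ⌊v * ((k:ℝ) + 1)⌋₊ := by
      rw [eventually_all_finset]
      intro u hu
      rw [eventually_all_finset]
      intro v hv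
      by_cases huv : u = v
      · exact Eventually.of_forall fun k h => absurd huv h
      have h0 : 0 < |u - v| := abs_pos.mpr (sub_ne_zero.mpr huv)
      obtain ⟨K, hK⟩ := exists_nat_gt (1 / |u - v|)
      filter_upwards [eventually_ge_atTop K] with k hk _ heq
      have hu0 : 0 ≤ u := (hT hu).1.1
      have hv0 : 0 ≤ v := (hT hv).1.1
      have hk' : (K:ℝ) ≤ k := by exact_mod_cast hk
      have a1 := Nat.floor_le (show 0 ≤ u * ((k:ℝ)+1) by positivity)
      have a2 := Nat.lt_floor_add_one (u * ((k:ℝ)+1))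
      have b1 := Nat.floor_le (show 0 ≤ v * ((k:ℝ)+1) by positivity)
      have b2 := Nat.lt_floor_add_one (v * ((k:ℝ)+1))
      rw [heq] at a1 a2
      have h3 : |u * ((k:ℝ)+1) - v * ((k:ℝ)+1)| < 1 := by
        rw [abs_lt]; constructor <;> linarith
      rw [← sub_mul, abs_mul, abs_of_pos (show (0:ℝ) < k + 1 by positivity)] at h3
      rw [div_lt_iff₀ h0] at hK
      nlinarith
    refine le_liminf_of_le (by isBoundedDefault) ?_
    filter_upwards [hev] with k hk
    have hk0 : (0:ℝ) < (k:ℝ) + 1 := by positivity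
    have h1 : ∀ u ∈ T, (Metric.closedBall (x ((⌊u * ((k:ℝ) + 1)⌋₊ : ℕ) / ((k:ℝ) + 1)))
        (L / ((k:ℝ) + 1))).indicator (1 : ℝ → ℝ≥0∞) s = 1 := by
      intro u hu
      apply indicator_of_mem
      have hu0 : 0 ≤ u := (hT hu).1.1
      have a1 := Nat.floor_le (show 0 ≤ u * ((k:ℝ)+1) by positivity)
      have a2 := Nat.lt_floor_add_one (u * ((k:ℝ)+1))
      rw [Metric.mem_closedBall, ← (hT hu).2]
      refine (hx.dist_le_mul _ _).trans ?_
      rw [show (L:ℝ)/((k:ℝ)+1) = L * ((k:ℝ)+1)⁻¹ from div_eq_mul_inv _ _]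
      refine mul_le_mul_of_nonneg_left ?_ L.2
      rw [Real.dist_eq, abs_le]
      have e : (⌊u * ((k:ℝ) + 1)⌋₊ : ℝ) / ((k:ℝ) + 1) * (k + 1) = ⌊u * ((k:ℝ) + 1)⌋₊ := by
        field_simp
      constructor
      · have : (⌊u * ((k:ℝ) + 1)⌋₊ : ℝ) / ((k:ℝ) + 1) ≤ u := by
          rw [div_le_iff₀ hk0]; exact a1
        have h9 : (0:ℝ) ≤ ((k:ℝ)+1)⁻¹ := by positivity
        linarith
      · rw [sub_le_iff_le_add, inv_eq_one_div, ← add_div, le_div_iff₀ hk0]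
        linarith
    calc (m : ℝ≥0∞) = ∑ u ∈ T, (1 : ℝ≥0∞) := by simp [hTm]
      _ = ∑ u ∈ T, (Metric.closedBall (x ((⌊u * ((k:ℝ) + 1)⌋₊ : ℕ) / ((k:ℝ) + 1)))
        (L / ((k:ℝ) + 1))).indicator (1 : ℝ → ℝ≥0∞) s := Finset.sum_congr rfl fun u hu => (h1 u hu).symm
      _ = ∑ i ∈ T.image (fun u => ⌊u * ((k:ℝ) + 1)⌋₊), (Metric.closedBall (x ((i : ℕ) / ((k:ℝ) + 1)))
        (L / ((k:ℝ) + 1))).indicator (1 : ℝ → ℝ≥0∞) s := by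
          rw [Finset.sum_image]
          intro u hu v hv h
          by_contra hne
          exact hk u hu v hv hne h
      _ ≤ Nk k s := by
          apply Finset.sum_le_sum_of_subset
          intro i hi
          obtain ⟨u, hu, rfl⟩ := Finset.mem_image.mp hi
          rw [Finset.mem_range, Nat.lt_succ_iff]
          have hu1 : u ≤ 1 := (hT hu).1.2
          have : ⌊u * ((k:ℝ) + 1)⌋₊ ≤ ⌊((k + 1 : ℕ) : ℝ)⌋₊ := by
            apply Nat.floor_le_floor
            push_cast
            nlinarith
          rwa [Nat.floor_natCast] at this
  have : liminf (fun k => Nk k s) atTop = ∞ := ENNReal.eq_top_of_forall_nnreal_le (fun r => by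
    obtain ⟨m, hm⟩ := exists_nat_ge r
    refine le_trans ?_ (hge m)
    exact_mod_cast hm)
  exact absurd this hs.ne

theorem ae_finite_slice (γ : ℝ → ℂ) (L : ℝ≥0) (hγ : LipschitzWith L γ) :
    ∀ᵐ s : ℝ, {y : ℝ | (⟨s, y⟩ : ℂ) ∈ γ '' Icc 0 1}.Finite := by
  have hre : LipschitzWith L (fun u => (γ u).re) := by
    apply LipschitzWith.of_dist_le_mul
    intro a b
    refine le_trans ?_ (hγ.dist_le_mul a b)
    rw [Real.dist_eq, Complex.dist_eq, ← Complex.sub_re]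
    exact Complex.abs_re_le_norm _
  filter_upwards [ae_finite_fiber _ L hre] with s hs
  refine (hs.image (fun u => (γ u).im)).subset ?_
  rintro y ⟨u, hu, h⟩
  exact ⟨u, ⟨hu, by simp [h]⟩, by simp [h]⟩

lemma sl_mp : MeasurePreserving (fun p : ℝ × ℝ => (⟨p.1, p.2⟩ : ℂ)) :=
  Complex.volume_preserving_equiv_real_prod.symm

lemma sl_emb : MeasurableEmbedding (fun p : ℝ × ℝ => (⟨p.1, p.2⟩ : ℂ)) :=
  Complex.measurableEquivRealProd.symm.measurableEmbedding

lemma sl_ae {p : ℂ → Prop} (h : ∀ᵐ z, p z) : ∀ᵐ s : ℝ, ∀ᵐ y : ℝ, p ⟨s, y⟩ := by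
  have := sl_mp.quasiMeasurePreserving.ae h
  exact Measure.ae_ae_of_ae_prod this

lemma sl_integrable {f : ℂ → ℝ} (h : Integrable f) :
    ∀ᵐ s : ℝ, Integrable (fun y : ℝ => f ⟨s, y⟩) := by
  have := (sl_mp.integrable_comp_emb sl_emb).2 h
  exact Integrable.prod_right_ae this

lemma sl_integral_integrable {f : ℂ → ℝ} (h : Integrable f) :
    Integrable (fun s : ℝ => ∫ y : ℝ, f ⟨s, y⟩) := by
  have := (sl_mp.integrable_comp_emb sl_emb).2 h
  exact Integrable.integral_prod_left this

lemma sl_integral {f : ℂ → ℝ} (h : Integrable f) :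
    ∫ z, f z = ∫ s : ℝ, ∫ y : ℝ, f ⟨s, y⟩ := by
  have h1 := (sl_mp.integrable_comp_emb sl_emb).2 h
  rw [← sl_mp.integral_comp sl_emb]
  exact integral_prod _ h1

lemma sl_lintegral {f : ℂ → ℝ≥0∞} (h : Measurable f) :
    ∫⁻ z, f z = ∫⁻ s : ℝ, ∫⁻ y : ℝ, f ⟨s, y⟩ := by
  rw [← sl_mp.lintegral_comp h]
  exact lintegral_prod _ (h.comp sl_mp.measurable).aemeasurable

lemma sl_meas_lintegral {f : ℂ → ℝ≥0∞} (h : Measurable f) :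
    Measurable fun s : ℝ => ∫⁻ y : ℝ, f ⟨s, y⟩ :=
  Measurable.lintegral_prod_right' (h.comp sl_mp.measurable)

lemma sl_null {N : Set ℂ} (hN : MeasurableSet N)
    (h : ∀ᵐ s : ℝ, volume {y : ℝ | (⟨s, y⟩ : ℂ) ∈ N} = 0) : volume N = 0 := by
  rw [← sl_mp.measure_preimage hN.nullMeasurableSet]
  exact (Measure.measure_prod_null (sl_mp.measurable hN)).2 h

lemma sl_cont (s : ℝ) : Continuous fun y : ℝ => (⟨s, y⟩ : ℂ) := by
  have : (fun y : ℝ => (⟨s, y⟩ : ℂ)) = fun y : ℝ => (s : ℂ) + y * Complex.I := by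
    ext y
    apply Complex.ext <;> simp
  rw [this]; fun_prop

lemma sl_hasDeriv (s y : ℝ) : HasDerivAt (fun y : ℝ => (⟨s, y⟩ : ℂ)) Complex.I y := by
  have : (fun y : ℝ => (⟨s, y⟩ : ℂ)) = fun y : ℝ => (s : ℂ) + y * Complex.I := by
    ext y
    apply Complex.ext <;> simp
  rw [this]
  have := ((Complex.ofRealCLM.hasDerivAt (x := y)).mul_const Complex.I).const_add (s : ℂ)
  simpa using this

lemma sl_contDiff (s : ℝ) : ContDiff ℝ 1 fun y : ℝ => (⟨s, y⟩ : ℂ) := by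
  have : (fun y : ℝ => (⟨s, y⟩ : ℂ)) = fun y : ℝ => (s : ℂ) + y * Complex.I := by
    ext y
    apply Complex.ext <;> simp
  rw [this]
  exact contDiff_const.add ((Complex.ofRealCLM.contDiff).mul contDiff_const)

lemma sl_comp_hasDeriv {θ : ℂ → ℝ} (hθ : ContDiff ℝ 1 θ) (s y : ℝ) :
    HasDerivAt (fun y : ℝ => θ ⟨s, y⟩) (fderiv ℝ θ ⟨s, y⟩ Complex.I) y :=
  ((hθ.differentiable one_ne_zero _).hasFDerivAt).comp_hasDerivAt y (sl_hasDeriv s y)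

lemma sl_dist (s y y' : ℝ) : dist (⟨s, y⟩ : ℂ) ⟨s, y'⟩ = |y - y'| := by
  rw [Complex.dist_of_re_eq (by rfl)]; exact Real.dist_eq y y'

lemma exists_cutoff {V : Type*} [NormedAddCommGroup V] [NormedSpace ℝ V] [FiniteDimensional ℝ V]
    {s t : Set V} (hs : IsClosed s) (ht : IsClosed t) (hd : Disjoint s t) :
    ∃ κ : V → ℝ, ContDiff ℝ 2 κ ∧ (∀ x ∈ s, κ x = 0) ∧ (∀ x ∈ t, κ x = 1) ∧
      ∀ x, 0 ≤ κ x ∧ κ x ≤ 1 := by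
  obtain ⟨f, h0, h1, h2⟩ := exists_contMDiffMap_zero_one_of_isClosed (n := 2)
    (modelWithCornersSelf ℝ V) hs ht hd
  exact ⟨f, f.contMDiff.contDiff, fun x hx => h0 hx, fun x hx => h1 hx, fun x => h2 x⟩

lemma conv_pair {ρ ψ k : ℂ → ℝ} (hρ : Integrable ρ) (hψ : Integrable ψ)
    (hk : Continuous k) {C : ℝ} (hC : ∀ x, |k x| ≤ C) :
    ∫ x, (convolution ρ ψ (ContinuousLinearMap.lsmul ℝ ℝ) volume) x * k x =
      ∫ z, ρ z * ∫ x, ψ x * k (x + z) ∧ Integrable (fun z => ρ z * ∫ x, ψ x * k (x + z)) := by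
  have h1 : Integrable (fun p : ℂ × ℂ => (ρ p.2 * ψ (p.1 - p.2)) * k p.1)
      ((volume : Measure ℂ).prod volume) := by
    have := Integrable.convolution_integrand (ContinuousLinearMap.lsmul ℝ ℝ) (μ := volume)
      (ν := volume) hρ hψ
    have h2 := this.mul_bdd (c := C) (g := fun p : ℂ × ℂ => k p.1)
      (by fun_prop) (Eventually.of_forall fun p => by simpa using hC p.1)
    simpa using h2
  have e : ∀ z, ∫ x, (ρ z * ψ (x - z)) * k x = ρ z * ∫ x, ψ x * k (x + z) := by
    intro z
    rw [← integral_const_mul, ← integral_add_right_eq_self _ z]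
    congr 1; ext x; simp; ring
  constructor
  · simp_rw [convolution_def, ContinuousLinearMap.lsmul_apply, smul_eq_mul, ← integral_mul_const]
    rw [integral_integral_swap h1]
    simp_rw [e]
  · have := h1.integral_prod_right
    simp_rw [e] at this
    exact this

lemma moll_bound {ρ ψ : ℂ → ℝ} (hρc : Continuous ρ) (hρ : Integrable ρ) (hρ0 : ∀ z, 0 ≤ ρ z)
    (hρ1 : ∫ z, ρ z = 1) {δ : ℝ} (hδ : ∀ z, δ < ‖z‖ → ρ z = 0)
    (hψ : Integrable ψ) {c : ℂ} {R M : ℝ}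
    (hM : ∀ θ : ℂ → ℝ, ContDiff ℝ 1 θ → tsupport θ ⊆ Metric.ball c R → (∀ x, |θ x| ≤ 1) →
      ∫ x, ψ x * fderiv ℝ θ x Complex.I ≤ M)
    {r : ℝ} (hr : r + δ < R) {θ : ℂ → ℝ} (hθ : ContDiff ℝ 1 θ)
    (hθs : ∀ x, r < dist x c → θ x = 0) (hθ1 : ∀ x, |θ x| ≤ 1) :
    ∫ x, (convolution ρ ψ (ContinuousLinearMap.lsmul ℝ ℝ) volume) x *
      fderiv ℝ θ x Complex.I ≤ M := by
  have hcs : HasCompactSupport θ := by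
    refine HasCompactSupport.intro (isCompact_closedBall c r) fun x hx => hθs x ?_
    simpa using hx
  have hkc : Continuous fun x => fderiv ℝ θ x Complex.I :=
    (hθ.continuous_fderiv one_ne_zero).clm_apply continuous_const
  have hks : HasCompactSupport fun x => fderiv ℝ θ x Complex.I := hcs.fderiv_apply (𝕜 := ℝ) _
  obtain ⟨C, hC⟩ := hks.exists_bound_of_continuous hkc
  obtain ⟨e, hi⟩ := conv_pair hρ hψ hkc (C := C) (fun x => by simpa using hC x)
  rw [e]
  calc _ ≤ ∫ z, ρ z * M := by
        refine integral_mono hi (hρ.mul_const M) fun z => ?_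
        dsimp only
        by_cases hz : δ < ‖z‖
        · simp [hδ z hz]
        push Not at hz
        refine mul_le_mul_of_nonneg_left ?_ (hρ0 z)
        have := hM (fun x => θ (x + z)) (hθ.comp (contDiff_id.add contDiff_const)) ?_
          (fun x => hθ1 _)
        · simpa only [fderiv_comp_add_right] using this
        · refine (closure_minimal (t := Metric.closedBall c (r + δ)) ?_
            Metric.isClosed_closedBall).trans (Metric.closedBall_subset_ball hr)
          intro x hx
          by_contra hn
          rw [Metric.mem_closedBall, not_le] at hn
          apply hx
          apply hθs
          have : dist x c ≤ dist (x + z) c + ‖z‖ := by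
            calc dist x c ≤ dist x (x + z) + dist (x + z) c := dist_triangle _ _ _
              _ = _ := by rw [dist_self_add_right]; ring
          linarith
    _ = M := by rw [integral_mul_const, hρ1, one_mul]

lemma moll_L1 {u : ℂ → ℝ} (hu : ContDiff ℝ 2 u) {c : ℂ} {r1 r M : ℝ} (hr : r1 < r)
    (hM : ∀ θ : ℂ → ℝ, ContDiff ℝ 1 θ → (∀ x, r < dist x c → θ x = 0) → (∀ x, |θ x| ≤ 1) →
      ∫ x, u x * fderiv ℝ θ x Complex.I ≤ M) :
    ∫⁻ x in Metric.ball c r1, ‖fderiv ℝ u x Complex.I‖ₑ ≤ ENNReal.ofReal M := by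
  set w : ℂ → ℝ := fun x => fderiv ℝ u x Complex.I with hw
  have hw1 : ContDiff ℝ 1 w := (hu.fderiv_right (m := 1) (by norm_num)).clm_apply contDiff_const
  obtain ⟨κ, hκ, hκ0, hκ1, hκ01⟩ := exists_cutoff (s := (Metric.ball c r)ᶜ)
    (t := Metric.closedBall c r1) Metric.isOpen_ball.isClosed_compl Metric.isClosed_closedBall
    (by
      rw [disjoint_compl_left_iff_subset]
      exact Metric.closedBall_subset_ball hr)
  have hκ1' : ContDiff ℝ 1 κ := hκ.of_le (by norm_num)
  have hκs : HasCompactSupport κ := by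
    refine HasCompactSupport.intro (isCompact_closedBall c r) fun x hx => hκ0 x ?_
    simp at hx ⊢; exact hx.le
  have hκi : Integrable κ := hκ.continuous.integrable_of_hasCompactSupport hκs
  have hwκi : Integrable fun x => κ x * |w x| :=
    (hκ.continuous.mul hw1.continuous.abs).integrable_of_hasCompactSupport hκs.mul_right
  have key : ∀ ε : ℝ, 0 < ε → ∫ x, κ x * |w x| ≤ M + ε * ∫ x, κ x := by
    intro ε hε
    have hpos : ∀ x, 0 < w x ^ 2 + ε ^ 2 := fun x => by positivity
    set v : ℂ → ℝ := fun x => w x / Real.sqrt (w x ^ 2 + ε ^ 2) with hv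
    have hv1 : ContDiff ℝ 1 v := by
      refine hw1.div (ContDiff.sqrt (by fun_prop) fun x => (hpos x).ne') fun x => ?_
      exact (Real.sqrt_pos.2 (hpos x)).ne'
    have hvle : ∀ x, |v x| ≤ 1 := by
      intro x
      rw [hv, abs_div, abs_of_pos (Real.sqrt_pos.2 (hpos x)), div_le_one (Real.sqrt_pos.2 (hpos x))]
      apply Real.abs_le_sqrt
      nlinarith [sq_nonneg ε]
    set θ : ℂ → ℝ := fun x => -(κ x * v x) with hθ
    have hθ1 : ContDiff ℝ 1 θ := (hκ1'.mul hv1).neg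
    have hθs : HasCompactSupport θ := by
      refine HasCompactSupport.intro (isCompact_closedBall c r) fun x hx => ?_
      simp only [hθ]
      rw [hκ0 x (by simp at hx ⊢; exact hx.le)]; simp
    have h1 := hM θ hθ1 (fun x hx => by
        simp only [hθ]; rw [hκ0 x (by simp; exact hx.le)]; simp)
      (fun x => by
        simp only [hθ]
        rw [abs_neg, abs_mul, abs_of_nonneg (hκ01 x).1]
        exact mul_le_one₀ (hκ01 x).2 (abs_nonneg _) (hvle x))
    rw [integral_mul_fderiv_eq_neg_fderiv_mul_of_integrable] at h1
    rotate_left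
    · exact (hw1.continuous.mul hθ1.continuous).integrable_of_hasCompactSupport hθs.mul_left
    · refine (hu.continuous.mul ((hθ1.continuous_fderiv one_ne_zero).clm_apply
        continuous_const)).integrable_of_hasCompactSupport ?_
      exact (hθs.fderiv_apply (𝕜 := ℝ) _).mul_left
    · exact (hu.continuous.mul hθ1.continuous).integrable_of_hasCompactSupport hθs.mul_left
    · exact fun x _ => hu.differentiable (by norm_num) x
    · exact fun x _ => hθ1.differentiable one_ne_zero x
    rw [← integral_neg] at h1
    rw [← integral_const_mul]
    have h2 : ∫ x, κ x * |w x| ≤ ∫ x, (-(w x * θ x) + ε * κ x) := by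
      refine integral_mono hwκi ?_ fun x => ?_
      · exact ((hw1.continuous.mul hθ1.continuous).integrable_of_hasCompactSupport
          hθs.mul_left).neg.add (hκi.const_mul ε)
      · simp only [hθ, hv]
        have h3 : |w x| ≤ w x * (w x / √(w x ^ 2 + ε ^ 2)) + ε := by
          set q := √(w x ^ 2 + ε ^ 2) with hq
          have hq0 : 0 < q := Real.sqrt_pos.2 (hpos x)
          have hq2 : q ^ 2 = w x ^ 2 + ε ^ 2 := Real.sq_sqrt (hpos x).le
          have hqe : q ≤ |w x| + ε := by
            apply Real.sqrt_le_iff.2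
            refine ⟨by positivity, ?_⟩
            nlinarith [abs_nonneg (w x), sq_abs (w x)]
          have : w x * (w x / q) = w x ^ 2 / q := by ring
          rw [this, ← sub_le_iff_le_add, le_div_iff₀ hq0]
          rw [← sq_abs (w x)]
          rw [← sq_abs (w x)] at hq2
          have hqw : |w x| ≤ q := by nlinarith [abs_nonneg (w x)]
          have hqe' : ε ≤ q := by nlinarith [abs_nonneg (w x), sq_nonneg (w x)]
          nlinarith [abs_nonneg (w x)]
        have := mul_le_mul_of_nonneg_left h3 (hκ01 x).1
        linarith
    rw [integral_add] at h2
    · exact h2.trans (by gcongr)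
    · exact ((hw1.continuous.mul hθ1.continuous).integrable_of_hasCompactSupport
          hθs.mul_left).neg
    · exact hκi.const_mul ε
  have key2 : ∫ x, κ x * |w x| ≤ M := by
    have : Tendsto (fun ε : ℝ => M + ε * ∫ x, κ x) (𝓝[>] 0) (𝓝 (M + 0 * ∫ x, κ x)) :=
      tendsto_nhdsWithin_of_tendsto_nhds (Continuous.tendsto (by fun_prop) 0)
    rw [zero_mul, add_zero] at this
    exact ge_of_tendsto this (eventually_mem_nhdsWithin.mono fun ε hε => key ε hε)
  calc _ ≤ ∫⁻ x in Metric.ball c r1, ENNReal.ofReal (κ x * |w x|) := by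
        refine setLIntegral_mono' measurableSet_ball fun x hx => ?_
        rw [hκ1 x (Metric.ball_subset_closedBall hx), one_mul, Real.enorm_eq_ofReal_abs]
    _ ≤ ∫⁻ x, ENNReal.ofReal (κ x * |w x|) := setLIntegral_le_lintegral _ _
    _ = ENNReal.ofReal (∫ x, κ x * |w x|) := by
        rw [ofReal_integral_eq_lintegral_ofReal hwκi
          (Eventually.of_forall fun x => mul_nonneg (hκ01 x).1 (abs_nonneg _))]
    _ ≤ _ := ENNReal.ofReal_le_ofReal key2

/-- one-dimensional estimate -/
lemma slice_est {f : ℝ → ℝ} {u w : ℕ → ℝ → ℝ} (hu : ∀ j y, HasDerivAt (u j) (w j y) y)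
    (hw : ∀ j, Continuous (w j)) (hlim : ∀ᵐ y, Tendsto (fun j => u j y) atTop (𝓝 (f y)))
    {p q K m : ℝ} (hpq : p ≤ q) (hK : ∃ᶠ j in atTop, ∫ y in p..q, |w j y| ≤ K)
    {η : ℝ → ℝ} (hη : ContDiff ℝ 1 η) (hp : η p = 0) (hq : η q = 0)
    (hm : ∀ y ∈ Icc p q, |η y| ≤ m) :
    |∫ y in p..q, f y * deriv η y| ≤ K * m := by
  rcases hpq.eq_or_lt with rfl | hlt
  · have h0 := (abs_nonneg _).trans (hm p ⟨le_rfl, le_rfl⟩)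
    obtain ⟨j, hj⟩ := hK.exists
    simp only [intervalIntegral.integral_same] at hj ⊢
    simpa using mul_nonneg hj h0
  have hm0 : 0 ≤ m := (abs_nonneg _).trans (hm p ⟨le_rfl, hpq⟩)
  obtain ⟨φ, hφ, hφK⟩ := extraction_of_frequently_atTop hK
  have hη' : Continuous (deriv η) := hη.continuous_deriv le_rfl
  have hηd : ∀ y, HasDerivAt η (deriv η y) y := fun y =>
    (hη.differentiable one_ne_zero y).hasDerivAt
  have huc : ∀ j, Continuous (u j) := fun j =>
    continuous_iff_continuousAt.2 fun y => (hu j y).continuousAt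
  -- a convergence point
  obtain ⟨y0, hy0, hy0l⟩ : ∃ y0 ∈ Ioo p q, Tendsto (fun j => u j y0) atTop (𝓝 (f y0)) := by
    by_contra hcon
    push Not at hcon
    have : Ioo p q ⊆ {y | ¬ Tendsto (fun j => u j y) atTop (𝓝 (f y))} := fun y hy => hcon y hy
    have h0 : volume (Ioo p q) = 0 := measure_mono_null this hlim
    simp at h0; linarith
  obtain ⟨C, hC⟩ := (hy0l.comp hφ.tendsto_atTop).norm.isBoundedUnder_le.bddAbove_range
  have hC' : ∀ j, |u (φ j) y0| ≤ C := fun j => hC ⟨j, rfl⟩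
  have hbd : ∀ j, ∀ y ∈ Icc p q, |u (φ j) y| ≤ C + K := by
    intro j y hy
    have h1 : ∫ t in y0..y, w (φ j) t = u (φ j) y - u (φ j) y0 :=
      intervalIntegral.integral_eq_sub_of_hasDerivAt (fun t _ => hu _ t)
        ((hw _).intervalIntegrable _ _)
    have h2 : |∫ t in y0..y, w (φ j) t| ≤ ∫ t in p..q, |w (φ j) t| := by
      refine (intervalIntegral.norm_integral_le_integral_norm_uIoc (f := w (φ j))).trans ?_
      rw [intervalIntegral.integral_of_le hpq]
      refine setIntegral_mono_set ((hw _).abs.integrableOn_Ioc)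
        (Eventually.of_forall fun t => abs_nonneg _) (HasSubset.Subset.eventuallyLE ?_)
      intro t ht
      rw [mem_uIoc] at ht
      rcases ht with ht | ht
      · exact ⟨hy0.1.trans ht.1, ht.2.trans hy.2⟩
      · exact ⟨lt_of_le_of_lt hy.1 ht.1, ht.2.trans hy0.2.le⟩
    have h3 := hφK j
    have h4 : u (φ j) y = u (φ j) y0 + ∫ t in y0..y, w (φ j) t := by rw [h1]; ring
    rw [h4]
    exact (abs_add_le _ _).trans (by linarith [hC' j])
  obtain ⟨D, hD⟩ := (isCompact_Icc (a := p) (b := q)).exists_bound_of_continuousOn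
    hη'.continuousOn
  have hconv : Tendsto (fun j => ∫ y in p..q, u (φ j) y * deriv η y) atTop
      (𝓝 (∫ y in p..q, f y * deriv η y)) := by
    refine intervalIntegral.tendsto_integral_filter_of_dominated_convergence
      (fun _ => (C + K) * D) ?_ ?_ ?_ ?_
    · exact Eventually.of_forall fun j => ((huc _).mul hη').aestronglyMeasurable
    · refine Eventually.of_forall fun j => Eventually.of_forall fun y hy => ?_
      rw [uIoc_of_le hpq] at hy
      have hy' := Ioc_subset_Icc_self hy
      rw [norm_mul]
      exact mul_le_mul (hbd j y hy') (hD y hy') (norm_nonneg _)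
        ((abs_nonneg _).trans (hbd j y hy'))
    · exact intervalIntegrable_const
    · filter_upwards [hlim] with y hy _
      exact (hy.comp hφ.tendsto_atTop).mul_const _
  refine le_of_tendsto hconv.abs (Eventually.of_forall fun j => ?_)
  rw [intervalIntegral.integral_mul_deriv_eq_deriv_mul (fun t _ => hu (φ j) t)
    (fun t _ => hηd t) ((hw _).intervalIntegrable _ _) (hη'.intervalIntegrable _ _), hp, hq]
  simp only [mul_zero, sub_zero, zero_sub, abs_neg]
  calc |∫ y in p..q, w (φ j) y * η y| ≤ ∫ y in p..q, |w (φ j) y * η y| :=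
        intervalIntegral.abs_integral_le_integral_abs hpq
    _ ≤ ∫ y in p..q, |w (φ j) y| * m := by
        refine intervalIntegral.integral_mono_on hpq
          (((hw _).mul hη.continuous).abs.intervalIntegrable _ _)
          (((hw _).abs.mul continuous_const).intervalIntegrable _ _) fun y hy => ?_
        rw [abs_mul]
        exact mul_le_mul_of_nonneg_left (hm y hy) (abs_nonneg _)
    _ = (∫ y in p..q, |w (φ j) y|) * m := by rw [intervalIntegral.integral_mul_const]
    _ ≤ K * m := by gcongr; exact hφK j

theorem slice_bv {ψ : ℂ → ℝ} (hψ : Integrable ψ) {c : ℂ} {R M : ℝ}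
    (hM : ∀ θ : ℂ → ℝ, ContDiff ℝ 1 θ → tsupport θ ⊆ Metric.ball c R → (∀ x, |θ x| ≤ 1) →
      ∫ x, ψ x * fderiv ℝ θ x Complex.I ≤ M) {r1 : ℝ} (hr1 : r1 < R) :
    ∃ V : ℝ → ℝ, Integrable V ∧ (∀ s, 0 ≤ V s) ∧ ∀ᵐ s : ℝ, ∀ p q m : ℝ, p ≤ q →
      (∀ y ∈ Icc p q, (⟨s, y⟩ : ℂ) ∈ Metric.ball c r1) → ∀ η : ℝ → ℝ, ContDiff ℝ 1 η →
      η p = 0 → η q = 0 → (∀ y ∈ Icc p q, |η y| ≤ m) →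
      |∫ y in p..q, ψ ⟨s, y⟩ * deriv η y| ≤ V s * m := by
  set d : ℝ := (R - r1) / 4 with hd
  have hd0 : 0 < d := by rw [hd]; linarith
  let ρ : ℕ → ContDiffBump (0 : ℂ) := fun j =>
    ⟨d / (j + 1) / 2, d / (j + 1), by positivity, by
      have : 0 < d / ((j:ℝ) + 1) := by positivity
      linarith⟩
  have hrho : ∀ j, (ρ j).rOut ≤ d := fun j => by
    change d / ((j:ℝ) + 1) ≤ d
    exact div_le_self hd0.le (by linarith [(Nat.cast_nonneg j : (0:ℝ) ≤ j)])
  have hr0 : Tendsto (fun j => (ρ j).rOut) atTop (𝓝 0) := by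
    change Tendsto (fun j : ℕ => d / ((j:ℝ) + 1)) atTop (𝓝 0)
    exact tendsto_const_div_atTop_nhds_zero_nat d |>.comp (tendsto_add_atTop_nat 1) |>.congr
      fun j => by simp
  set u : ℕ → ℂ → ℝ := fun j => convolution ((ρ j).normed volume) ψ
    (ContinuousLinearMap.lsmul ℝ ℝ) volume with hu
  have hae : ∀ᵐ x, Tendsto (fun j => u j x) atTop (𝓝 (ψ x)) :=
    ContDiffBump.ae_convolution_tendsto_right_of_locallyIntegrable (K := 2) hr0
      (Eventually.of_forall fun j => by
        change d / ((j:ℝ) + 1) ≤ 2 * (d / ((j:ℝ) + 1) / 2); linarith) hψ.locallyIntegrable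
  have huC : ∀ j, ContDiff ℝ 2 (u j) := fun j =>
    (ρ j).hasCompactSupport_normed.contDiff_convolution_left (n := 2) _ (ρ j).contDiff_normed
      hψ.locallyIntegrable
  have hL1 : ∀ j, ∫⁻ x in Metric.ball c r1, ‖fderiv ℝ (u j) x Complex.I‖ₑ ≤ ENNReal.ofReal M := by
    intro j
    refine moll_L1 (r := r1 + d) (huC j) (by linarith) fun θ h1 h2 h3 => ?_
    refine moll_bound (δ := d) (ρ j).continuous_normed (ρ j).integrable_normed
      (fun z => (ρ j).nonneg_normed z) (ρ j).integral_normed (fun z hz => ?_) hψ hM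
      (by rw [hd]; linarith) h1 h2 h3
    by_contra hne
    have : z ∈ Function.support ((ρ j).normed volume) := hne
    rw [(ρ j).support_normed_eq, Metric.mem_ball, dist_zero_right] at this
    linarith [hrho j]
  set W : ℕ → ℂ → ℝ≥0∞ := fun j =>
    (Metric.ball c r1).indicator fun x => ‖fderiv ℝ (u j) x Complex.I‖ₑ with hW
  have hwc : ∀ j, Continuous fun x => fderiv ℝ (u j) x Complex.I := fun j =>
    ((huC j).continuous_fderiv (by norm_num)).clm_apply continuous_const
  have hWm : ∀ j, Measurable (W j) := fun j =>
    ((hwc j).measurable.enorm).indicator measurableSet_ball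
  set V' : ℝ → ℝ≥0∞ := fun s => liminf (fun j => ∫⁻ y, W j ⟨s, y⟩) atTop with hV'
  have hVm : Measurable V' := Measurable.liminf fun j => sl_meas_lintegral (hWm j)
  have hVi : ∫⁻ s, V' s ≤ ENNReal.ofReal M := by
    refine (lintegral_liminf_le fun j => sl_meas_lintegral (hWm j)).trans ?_
    refine liminf_le_of_le (by isBoundedDefault) fun b hb => ?_
    obtain ⟨j, hj⟩ := hb.exists
    refine hj.trans ?_
    rw [← sl_lintegral (hWm j), hW]
    dsimp only
    rw [lintegral_indicator measurableSet_ball]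
    exact hL1 j
  have hVi' : ∫⁻ s, V' s ≠ ∞ := (hVi.trans_lt ENNReal.ofReal_lt_top).ne
  refine ⟨fun s => (V' s).toReal, integrable_toReal_of_lintegral_ne_top hVm.aemeasurable hVi',
    fun s => ENNReal.toReal_nonneg, ?_⟩
  filter_upwards [sl_ae hae, ae_lt_top hVm hVi'] with s hs hsV p q m hpq hin η hη hηp hηq hηm
  have hm0 : 0 ≤ m := (abs_nonneg _).trans (hηm p ⟨le_rfl, hpq⟩)
  have main : ∀ ε : ℝ, 0 < ε →
      |∫ y in p..q, ψ ⟨s, y⟩ * deriv η y| ≤ ((V' s).toReal + ε) * m := by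
    intro ε hε
    refine slice_est (u := fun j y => u j ⟨s, y⟩) (w := fun j y => fderiv ℝ (u j) ⟨s, y⟩ Complex.I)
      (fun j y => sl_comp_hasDeriv ((huC j).of_le (by norm_num)) s y)
      (fun j => (hwc j).comp (sl_cont s)) hs hpq ?_ hη hηp hηq hηm
    have hlt : V' s < V' s + ENNReal.ofReal ε :=
      ENNReal.lt_add_right hsV.ne (by simpa using hε)
    have hfr := frequently_lt_of_liminf_lt (by isBoundedDefault) hlt
    refine hfr.mono fun j hj => ?_
    have h1 : ∫⁻ y in Ioc p q, ‖fderiv ℝ (u j) ⟨s, y⟩ Complex.I‖ₑ ≤ ∫⁻ y, W j ⟨s, y⟩ := by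
      rw [← lintegral_indicator measurableSet_Ioc]
      refine lintegral_mono fun y => ?_
      by_cases hy : y ∈ Ioc p q
      · rw [indicator_of_mem hy, hW]
        simp only
        rw [indicator_of_mem (hin y (Ioc_subset_Icc_self hy))]
      · rw [indicator_of_notMem hy]; exact zero_le
    rw [intervalIntegral.integral_of_le hpq]
    have h2 := (h1.trans hj.le)
    have h3 : ∫ y in Ioc p q, |fderiv ℝ (u j) ⟨s, y⟩ Complex.I| =
        (∫⁻ y in Ioc p q, ‖fderiv ℝ (u j) ⟨s, y⟩ Complex.I‖ₑ).toReal :=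
      integral_norm_eq_lintegral_enorm ((hwc j).comp (sl_cont s)).aestronglyMeasurable
    rw [h3]
    refine (ENNReal.toReal_mono (ENNReal.add_lt_top.2 ⟨hsV, ENNReal.ofReal_lt_top⟩).ne h2).trans ?_
    rw [ENNReal.toReal_add hsV.ne ENNReal.ofReal_ne_top, ENNReal.toReal_ofReal hε.le]
  have : Tendsto (fun ε : ℝ => ((V' s).toReal + ε) * m) (𝓝[>] 0) (𝓝 (((V' s).toReal + 0) * m)) :=
      tendsto_nhdsWithin_of_tendsto_nhds (Continuous.tendsto (by fun_prop) 0)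
  rw [add_zero] at this
  exact ge_of_tendsto this (eventually_mem_nhdsWithin.mono fun ε hε => main ε hε)

structure OneD (f : ℝ → ℝ) (χ : ℕ → ℝ → ℝ) (φ : ℝ → ℝ) (C O G W Bl : Set ℝ) (V : ℝ) : Prop where
  fi : Integrable f
  χc : ∀ k, ContDiff ℝ 1 (χ k)
  φc : ContDiff ℝ 1 φ
  φs : HasCompactSupport φ
  Cc : IsClosed C
  OC : O ⊆ C
  WC : Disjoint W C
  χ1 : ∀ k, ∀ y ∈ C, χ k y = 1
  χb : ∀ k y, 0 ≤ χ k y ∧ χ k y ≤ 1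
  χ0 : ∀ y, y ∉ C → ∃ N ∈ 𝓝 y, ∀ᶠ k in atTop, ∀ y' ∈ N, χ k y' = 0
  f0 : ∀ᵐ y, y ∈ G → f y = 0
  bv : ∀ p q m : ℝ, p ≤ q → Icc p q ⊆ Bl → ∀ η : ℝ → ℝ, ContDiff ℝ 1 η →
      η p = 0 → η q = 0 → (∀ y ∈ Icc p q, |η y| ≤ m) →
      |∫ y in p..q, f y * deriv η y| ≤ V * m
  Blo : IsOpen Bl
  φBl : tsupport φ ⊆ Bl
  V0 : 0 ≤ V

namespace OneD
variable {f : ℝ → ℝ} {χ : ℕ → ℝ → ℝ} {φ : ℝ → ℝ} {C O G W Bl : Set ℝ} {V : ℝ}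

lemma seg_W (H : OneD f χ φ C O G W Bl V) {p q : ℝ} (hpq : p ≤ q) (hB : Icc p q ⊆ Bl)
    (hW : Ioo p q ⊆ W) (hp : p ∉ C ∨ φ p = 0) (hq : q ∉ C ∨ φ q = 0) :
    Tendsto (fun k => ∫ y in p..q, f y * deriv (fun y => χ k y * φ y) y) atTop (𝓝 0) := by
  have hend : ∀ x, (x ∉ C ∨ φ x = 0) → ∀ᶠ k in atTop, χ k x * φ x = 0 := by
    rintro x (h | h)
    · obtain ⟨N, hN, h⟩ := H.χ0 x h
      filter_upwards [h] with k hk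
      rw [hk x (mem_of_mem_nhds hN), zero_mul]
    · exact Eventually.of_forall fun k => by rw [h, mul_zero]
  have hsup : ∀ ε : ℝ, 0 < ε → ∀ᶠ k in atTop, ∀ y ∈ Icc p q, |χ k y * φ y| ≤ ε := by
    intro ε hε
    have hloc : ∀ y ∈ Icc p q, ∃ N ∈ 𝓝[Icc p q] y, ∀ᶠ k in atTop, ∀ y' ∈ N, |χ k y' * φ y'| ≤ ε := by
      intro y hy
      have hy' : y ∉ C ∨ φ y = 0 := by
        rcases hy.1.eq_or_lt with rfl | h1
        · exact hp
        rcases hy.2.eq_or_lt with rfl | h2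
        · exact hq
        · exact Or.inl fun h => H.WC.le_bot ⟨hW ⟨h1, h2⟩, h⟩
      rcases hy' with h | h
      · obtain ⟨N, hN, h⟩ := H.χ0 y h
        refine ⟨N, mem_nhdsWithin_of_mem_nhds hN, ?_⟩
        filter_upwards [h] with k hk y' hy'
        rw [hk y' hy']; simpa using hε.le
      · refine ⟨{y' | |φ y'| < ε}, mem_nhdsWithin_of_mem_nhds ?_, ?_⟩
        · exact (isOpen_lt H.φc.continuous.abs continuous_const).mem_nhds (by simpa [h] using hε)
        · refine Eventually.of_forall fun k y' hy' => ?_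
          rw [abs_mul, abs_of_nonneg (H.χb k y').1]
          exact (mul_le_of_le_one_left (abs_nonneg _) (H.χb k y').2).trans (le_of_lt hy')
    refine isCompact_Icc.induction_on (p := fun s => ∀ᶠ k in atTop, ∀ y ∈ s, |χ k y * φ y| ≤ ε)
      (by simp) (fun s t hst h => h.mono fun k hk y hy => hk y (hst hy)) ?_ hloc
    intro s t hs ht
    filter_upwards [hs, ht] with k h1 h2 y hy
    exact hy.elim (h1 y) (h2 y)
  rw [Metric.tendsto_nhds]
  intro ε hε
  filter_upwards [hend p hp, hend q hq, hsup (ε / (V + 1)) (by have := H.V0; positivity)] with k h1 h2 h3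
  rw [dist_zero_right, Real.norm_eq_abs]
  refine (H.bv p q _ hpq hB _ ((H.χc k).mul H.φc) h1 h2 h3).trans_lt ?_
  have := H.V0
  rw [mul_div_assoc', div_lt_iff₀ (by positivity)]
  nlinarith

/-- the integrand -/
noncomputable def J (f : ℝ → ℝ) (χ : ℕ → ℝ → ℝ) (φ : ℝ → ℝ) (C : Set ℝ) (k : ℕ) (y : ℝ) : ℝ :=
  f y * deriv (fun y => χ k y * φ y) y - C.indicator f y * deriv φ y

lemma J_int1 (H : OneD f χ φ C O G W Bl V) (k : ℕ) :
    Integrable (fun y => f y * deriv (fun y => χ k y * φ y) y) := by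
  have h := (H.χc k).mul H.φc
  have hc := h.continuous_deriv le_rfl
  have hs : HasCompactSupport (deriv (fun y => χ k y * φ y)) := (H.φs.mul_left).deriv
  obtain ⟨D, hD⟩ := hs.exists_bound_of_continuous hc
  exact H.fi.mul_bdd hc.aestronglyMeasurable (Eventually.of_forall hD)

lemma J_int2 (H : OneD f χ φ C O G W Bl V) :
    Integrable (fun y => C.indicator f y * deriv φ y) := by
  have hc := H.φc.continuous_deriv le_rfl
  obtain ⟨D, hD⟩ := H.φs.deriv.exists_bound_of_continuous hc
  exact (H.fi.indicator H.Cc.measurableSet).mul_bdd hc.aestronglyMeasurable (Eventually.of_forall hD)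

lemma J_int (H : OneD f χ φ C O G W Bl V) (k : ℕ) : Integrable (J f χ φ C k) :=
  (H.J_int1 k).sub H.J_int2

lemma seg (H : OneD f χ φ C O G W Bl V) {p q : ℝ} (hpq : p ≤ q)
    (h : Ioo p q ⊆ O ∨ Ioo p q ⊆ G ∨ (Ioo p q ⊆ W ∧ Icc p q ⊆ Bl ∧
      (p ∉ C ∨ φ p = 0) ∧ (q ∉ C ∨ φ q = 0))) :
    Tendsto (fun k => ∫ y in p..q, J f χ φ C k y) atTop (𝓝 0) := by
  have red : ∀ k, ∫ y in p..q, J f χ φ C k y = ∫ y in Ioo p q, J f χ φ C k y := fun k => by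
    rw [intervalIntegral.integral_of_le hpq, integral_Ioc_eq_integral_Ioo]
  rcases h with h | h | ⟨h, hB, hp, hq⟩
  · refine tendsto_const_nhds.congr fun k => ?_
    rw [red]
    refine (setIntegral_eq_zero_of_forall_eq_zero fun y hy => ?_).symm
    have e : (fun y => χ k y * φ y) =ᶠ[𝓝 y] φ := by
      filter_upwards [isOpen_Ioo.mem_nhds hy] with y' hy'
      rw [H.χ1 k y' (H.OC (h hy')), one_mul]
    rw [J, e.deriv_eq, indicator_of_mem (H.OC (h hy)), sub_self]
  · refine tendsto_const_nhds.congr fun k => ?_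
    rw [red]
    refine (integral_eq_zero_of_ae ?_).symm
    filter_upwards [ae_restrict_mem measurableSet_Ioo, ae_restrict_of_ae H.f0] with y hy h0
    have := h0 (h hy)
    by_cases hC : y ∈ C <;> simp [J, this, hC]
  · refine (H.seg_W hpq hB h hp hq).congr fun k => ?_
    rw [red, intervalIntegral.integral_of_le hpq, integral_Ioc_eq_integral_Ioo]
    refine setIntegral_congr_fun measurableSet_Ioo fun y hy => ?_
    have : y ∉ C := fun hc => H.WC.le_bot ⟨h hy, hc⟩
    simp [J, this]

theorem main (H : OneD f χ φ C O G W Bl V)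
    (hL : ∀ y, (∀ᶠ y' in 𝓝[<] y, y' ∈ O) ∨ (∀ᶠ y' in 𝓝[<] y, y' ∈ G) ∨
      ((∀ᶠ y' in 𝓝[<] y, y' ∈ W) ∧ (y ∉ C ∨ φ y = 0)))
    (hR : ∀ y, (∀ᶠ y' in 𝓝[>] y, y' ∈ O) ∨ (∀ᶠ y' in 𝓝[>] y, y' ∈ G) ∨
      ((∀ᶠ y' in 𝓝[>] y, y' ∈ W) ∧ (y ∉ C ∨ φ y = 0))) :
    Tendsto (fun k => ∫ y, f y * deriv (fun y => χ k y * φ y) y) atTop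
      (𝓝 (∫ y, C.indicator f y * deriv φ y)) := by
  have hJz : ∀ k y, y ∉ tsupport φ → J f χ φ C k y = 0 := by
    intro k y hy
    have e : φ =ᶠ[𝓝 y] fun _ => 0 := notMem_tsupport_iff_eventuallyEq.1 hy
    have e2 : (fun y => χ k y * φ y) =ᶠ[𝓝 y] fun _ => 0 := e.mono fun y h => by
      dsimp only; rw [h, mul_zero]
    rw [J, e.deriv_eq, e2.deriv_eq]; simp
  have hii : ∀ k p q, IntervalIntegrable (J f χ φ C k) volume p q :=
    fun k p q => (H.J_int k).intervalIntegrable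
  -- local claim
  have hloc : ∀ y0, ∀ᶠ x in 𝓝 y0, Tendsto (fun k => ∫ y in x..y0, J f χ φ C k y) atTop (𝓝 0) := by
    intro y0
    by_cases hy0 : y0 ∈ tsupport φ
    · have hBl : ∃ ε > 0, Metric.ball y0 ε ⊆ Bl := Metric.isOpen_iff.1 H.Blo _ (H.φBl hy0)
      obtain ⟨ε, hε, hball⟩ := hBl
      rw [Real.ball_eq_Ioo] at hball
      have left : ∃ r > 0, ∀ x ∈ Ioo (y0 - r) y0,
          Tendsto (fun k => ∫ y in x..y0, J f χ φ C k y) atTop (𝓝 0) := by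
        rcases hL y0 with h | h | ⟨h, h'⟩ <;> rw [eventually_iff, mem_nhdsLT_iff_exists_Ioo_subset] at h <;>
          obtain ⟨l, hl, h⟩ := h
        · refine ⟨y0 - l, sub_pos.2 hl, fun x hx => H.seg hx.2.le (Or.inl ?_)⟩
          exact (Ioo_subset_Ioo_left (by linarith [hx.1])).trans h
        · refine ⟨y0 - l, sub_pos.2 hl, fun x hx => H.seg hx.2.le (Or.inr (Or.inl ?_))⟩
          exact (Ioo_subset_Ioo_left (by linarith [hx.1])).trans h
        · refine ⟨min (y0 - l) ε, lt_min (sub_pos.2 hl) hε, fun x hx =>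
            H.seg hx.2.le (Or.inr (Or.inr ⟨?_, ?_, ?_, h'⟩))⟩
          · exact (Ioo_subset_Ioo_left (by linarith [hx.1, min_le_left (y0 - l) ε])).trans h
          · intro y hy
            exact hball ⟨by linarith [hx.1, hy.1, min_le_right (y0 - l) ε], by linarith [hy.2]⟩
          · refine Or.inl fun hc => H.WC.le_bot ⟨h ⟨?_, hx.2⟩, hc⟩
            linarith [hx.1, min_le_left (y0 - l) ε]
      have right : ∃ r > 0, ∀ x ∈ Ioo y0 (y0 + r),
          Tendsto (fun k => ∫ y in y0..x, J f χ φ C k y) atTop (𝓝 0) := by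
        rcases hR y0 with h | h | ⟨h, h'⟩ <;> rw [eventually_iff, mem_nhdsGT_iff_exists_Ioo_subset] at h <;>
          obtain ⟨l, hl, h⟩ := h
        · refine ⟨l - y0, sub_pos.2 hl, fun x hx => H.seg hx.1.le (Or.inl ?_)⟩
          exact (Ioo_subset_Ioo_right (by linarith [hx.2])).trans h
        · refine ⟨l - y0, sub_pos.2 hl, fun x hx => H.seg hx.1.le (Or.inr (Or.inl ?_))⟩
          exact (Ioo_subset_Ioo_right (by linarith [hx.2])).trans h
        · refine ⟨min (l - y0) ε, lt_min (sub_pos.2 hl) hε, fun x hx =>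
            H.seg hx.1.le (Or.inr (Or.inr ⟨?_, ?_, h', ?_⟩))⟩
          · exact (Ioo_subset_Ioo_right (by linarith [hx.2, min_le_left (l - y0) ε])).trans h
          · intro y hy
            exact hball ⟨by linarith [hy.1], by linarith [hx.2, hy.2, min_le_right (l - y0) ε]⟩
          · refine Or.inl fun hc => H.WC.le_bot ⟨h ⟨hx.1, ?_⟩, hc⟩
            linarith [hx.2, min_le_left (l - y0) ε]
      obtain ⟨r, hr, hl⟩ := left
      obtain ⟨r', hr', hrr⟩ := right
      filter_upwards [Ioo_mem_nhds (show y0 - r < y0 by linarith) (show y0 < y0 + r' by linarith)]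
        with x hx
      rcases lt_trichotomy x y0 with h | h | h
      · exact hl x ⟨hx.1, h⟩
      · subst h; simp
      · simpa [intervalIntegral.integral_symm y0 x] using (hrr x ⟨h, hx.2⟩).neg
    · obtain ⟨ε, hε, hb⟩ := Metric.isOpen_iff.1 (isClosed_tsupport φ).isOpen_compl y0 hy0
      filter_upwards [Metric.ball_mem_nhds y0 hε] with x hx
      refine tendsto_const_nhds.congr fun k => ?_
      refine (intervalIntegral.integral_zero_ae (Eventually.of_forall fun y hy => ?_)).symm
      apply hJz
      apply hb
      exact (convex_ball y0 ε).ordConnected.uIcc_subset hx (Metric.mem_ball_self hε)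
        (uIoc_subset_uIcc hy)
  obtain ⟨T, hT⟩ := H.φs.isCompact.isBounded.subset_closedBall 0
  rw [Real.closedBall_eq_Icc] at hT
  simp only [zero_sub, zero_add] at hT
  set S := {x | Tendsto (fun k => ∫ y in (-T - 1)..x, J f χ φ C k y) atTop (𝓝 0)} with hS
  have step : ∀ y0, ∀ᶠ x in 𝓝 y0, (x ∈ S ↔ y0 ∈ S) := by
    intro y0
    filter_upwards [hloc y0] with x hx
    constructor
    · intro h
      have := Tendsto.add (show Tendsto _ _ _ from h) hx
      simp only [add_zero] at this
      refine this.congr fun k => ?_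
      exact intervalIntegral.integral_add_adjacent_intervals (hii k _ _) (hii k _ _)
    · intro h
      have := Tendsto.sub (show Tendsto _ _ _ from h) hx
      simp only [sub_zero] at this
      refine this.congr fun k => ?_
      rw [sub_eq_iff_eq_add]
      exact (intervalIntegral.integral_add_adjacent_intervals (hii k _ _) (hii k _ _)).symm
  have hclopen : IsClopen S := by
    constructor
    · rw [← isOpen_compl_iff, isOpen_iff_mem_nhds]
      intro y0 hy0
      filter_upwards [step y0] with x hx
      exact fun h => hy0 (hx.1 h)
    · rw [isOpen_iff_mem_nhds]
      intro y0 hy0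
      filter_upwards [step y0] with x hx
      exact hx.2 hy0
  have huniv : S = univ := hclopen.eq_univ ⟨-T - 1, by simp [hS]⟩
  have hfin : (T + 1) ∈ S := by rw [huniv]; trivial
  have hfin' : Tendsto (fun k => ∫ y, J f χ φ C k y) atTop (𝓝 0) := by
    refine Tendsto.congr (fun k => ?_) (show Tendsto _ _ _ from hfin)
    by_cases hTT : -T - 1 ≤ T + 1
    · apply intervalIntegral.integral_eq_integral_of_support_subset
      intro y hy
      have h1 : y ∈ tsupport φ := by
        by_contra hn
        exact hy (hJz k y hn)
      have := hT h1
      exact ⟨by linarith [this.1], by linarith [this.2]⟩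
    · have hz : ∀ y, J f χ φ C k y = 0 := fun y => by
        apply hJz
        intro h
        have := hT h
        linarith [this.1, this.2]
      simp [hz]
  have := hfin'.add_const (∫ y, C.indicator f y * deriv φ y)
  rw [zero_add] at this
  refine this.congr fun k => ?_
  simp only [J]
  rw [integral_sub (H.J_int1 k) H.J_int2]; ring

end OneD

def LJ (V : Set ℂ) : Prop :=
  IsOpen V ∧ IsBounded V ∧
  ∃ (γ : ℝ → ℂ) (L : ℝ≥0), LipschitzWith L γ ∧ Function.Periodic γ 1 ∧
    Set.InjOn γ (Set.Ico 0 1) ∧ γ '' Set.Icc 0 1 = frontier V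

lemma LJ.isolated {V : Set ℂ} (h : LJ V) : ∀ᵐ s : ℝ, ¬ ∃ y, (⟨s,y⟩:ℂ) ∈ closure V ∧
    ∃ ε > 0, ∀ y', |y'-y| < ε → y' ≠ y → (⟨s,y'⟩:ℂ) ∉ closure V := by
  obtain ⟨h1, h2, γ, L, h3, h4, h5, h6⟩ := h
  have := countable_isolated h1 (rectProp_of_jordan h1 h2 γ h3.continuous h4 h5 h6)
  exact this.ae_notMem volume

lemma LJ.finite {V : Set ℂ} (h : LJ V) : ∀ᵐ s : ℝ, {y | (⟨s,y⟩:ℂ) ∈ frontier V}.Finite := by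
  obtain ⟨h1, h2, γ, L, h3, h4, h5, h6⟩ := h
  rw [← h6]; exact ae_finite_slice γ L h3

lemma isol_of_sides {N : Set ℂ} {s y : ℝ}
    (hl : ∀ᶠ y' in 𝓝[<] y, (⟨s,y'⟩:ℂ) ∉ N) (hr : ∀ᶠ y' in 𝓝[>] y, (⟨s,y'⟩:ℂ) ∉ N) :
    ∃ ε > 0, ∀ y', |y'-y| < ε → y' ≠ y → (⟨s,y'⟩:ℂ) ∉ N := by
  have : ∀ᶠ y' in 𝓝[≠] y, (⟨s,y'⟩:ℂ) ∉ N := by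
    rw [← Iio_union_Ioi, nhdsWithin_union]
    exact eventually_sup.2 ⟨hl, hr⟩
  rw [eventually_nhdsWithin_iff, Metric.eventually_nhds_iff] at this
  obtain ⟨ε, hε, h⟩ := this
  exact ⟨ε, hε, fun y' h1 h2 => h (by rwa [Real.dist_eq]) h2⟩

lemma frontier_F {n : ℕ} {A : Fin n → Set ℂ} {F : Set ℂ}
    (hF : F = ⋃ i, closure (A i)) (hA : ∀ i, IsOpen (A i)) : frontier F ⊆ ⋃ i, frontier (A i) := by
  have hFc : IsClosed F := by rw [hF]; exact isClosed_iUnion_of_finite fun i => isClosed_closure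
  intro x hx
  rw [hFc.frontier_eq] at hx
  have h1 := hx.1
  rw [hF, mem_iUnion] at h1
  obtain ⟨i, hi⟩ := h1
  refine mem_iUnion.2 ⟨i, hi, fun h => hx.2 ?_⟩
  refine interior_mono ?_ h
  rw [hF]
  exact subset_closure.trans (subset_iUnion (fun i => closure (A i)) i)

/-- side typing -/
lemma side_type {F U l : Set ℂ} (hFc : IsClosed F) (hUo : IsOpen U) 
    (hfr : frontier U ⊆ frontier F ∪ l) {s : ℝ}
    {I : Set ℝ} (hI : IsPreconnected I) (hd : ∀ y ∈ I, (⟨s,y⟩:ℂ) ∉ frontier F ∪ l) :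
    (∀ y ∈ I, (⟨s,y⟩:ℂ) ∈ U) ∨ (∀ y ∈ I, (⟨s,y⟩:ℂ) ∈ interior F) ∨
      (∀ y ∈ I, (⟨s,y⟩:ℂ) ∈ (F ∪ closure U)ᶜ) := by
  have hP : IsPreconnected ((fun y : ℝ => (⟨s,y⟩:ℂ)) '' I) := hI.image _ (sl_cont s).continuousOn
  have d1 : Disjoint ((fun y : ℝ => (⟨s,y⟩:ℂ)) '' I) (frontier F) := by
    rw [Set.disjoint_left]; rintro _ ⟨y, hy, rfl⟩ h; exact hd y hy (Or.inl h)
  have d2 : Disjoint ((fun y : ℝ => (⟨s,y⟩:ℂ)) '' I) (frontier U) := by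
    rw [Set.disjoint_left]; rintro _ ⟨y, hy, rfl⟩ h; exact hd y hy (hfr h)
  rcases preconn_frontier hP d1 with h1 | h1
  · exact Or.inr (Or.inl fun y hy => h1 ⟨y, hy, rfl⟩)
  rcases preconn_frontier hP d2 with h2 | h2
  · rw [hUo.interior_eq] at h2
    exact Or.inl fun y hy => h2 ⟨y, hy, rfl⟩
  · refine Or.inr (Or.inr fun y hy h => ?_)
    rcases h with h | h
    · rw [hFc.closure_eq] at h1
      exact h1 ⟨y, hy, rfl⟩ h
    · exact h2 ⟨y, hy, rfl⟩ h

lemma side_L {T : Set ℝ} (hT : T.Finite) (y0 : ℝ) : ∃ p < y0, ∀ y ∈ Ioo p y0, y ∉ T := by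
  have : ∀ᶠ y in 𝓝[<] y0, y ∉ T := by
    have h : (T \ {y0})ᶜ ∈ 𝓝 y0 := (hT.subset diff_subset).isClosed.isOpen_compl.mem_nhds (by simp)
    filter_upwards [mem_nhdsWithin_of_mem_nhds h, self_mem_nhdsWithin] with y hy hy' hyT
    exact hy ⟨hyT, ne_of_lt hy'⟩
  rw [eventually_iff, mem_nhdsLT_iff_exists_Ioo_subset] at this
  obtain ⟨p, hp, h⟩ := this
  exact ⟨p, hp, h⟩

lemma side_R {T : Set ℝ} (hT : T.Finite) (y0 : ℝ) : ∃ q > y0, ∀ y ∈ Ioo y0 q, y ∉ T := by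
  have : ∀ᶠ y in 𝓝[>] y0, y ∉ T := by
    have h : (T \ {y0})ᶜ ∈ 𝓝 y0 := (hT.subset diff_subset).isClosed.isOpen_compl.mem_nhds (by simp)
    filter_upwards [mem_nhdsWithin_of_mem_nhds h, self_mem_nhdsWithin] with y hy hy' hyT
    exact hy ⟨hyT, ne_of_gt hy'⟩
  rw [eventually_iff, mem_nhdsGT_iff_exists_Ioo_subset] at this
  obtain ⟨p, hp, h⟩ := this
  exact ⟨p, hp, h⟩

lemma sides {n : ℕ} {A : Fin n → Set ℂ} {F U l : Set ℂ} (hF : F = ⋃ i, closure (A i))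
    (hA : ∀ i, LJ (A i)) (hUo : IsOpen U) (hUc : IsPreconnected U) (hUF : U ∩ F = ∅)
    (hfr : frontier U ⊆ frontier F ∪ l) (hl : ∀ᵐ s : ℝ, {y | (⟨s,y⟩:ℂ) ∈ l}.Finite) :
    ∀ᵐ s : ℝ, ∀ y : ℝ, 
      ((∀ᶠ y' in 𝓝[<] y, (⟨s,y'⟩:ℂ) ∈ U) ∨ (∀ᶠ y' in 𝓝[<] y, (⟨s,y'⟩:ℂ) ∈ interior F) ∨
      ((∀ᶠ y' in 𝓝[<] y, (⟨s,y'⟩:ℂ) ∈ (F ∪ closure U)ᶜ) ∧ 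
        ((⟨s,y⟩:ℂ) ∉ closure U ∨ (⟨s,y⟩:ℂ) ∈ l))) ∧
      ((∀ᶠ y' in 𝓝[>] y, (⟨s,y'⟩:ℂ) ∈ U) ∨ (∀ᶠ y' in 𝓝[>] y, (⟨s,y'⟩:ℂ) ∈ interior F) ∨
      ((∀ᶠ y' in 𝓝[>] y, (⟨s,y'⟩:ℂ) ∈ (F ∪ closure U)ᶜ) ∧ 
        ((⟨s,y⟩:ℂ) ∉ closure U ∨ (⟨s,y⟩:ℂ) ∈ l))) := by
  have hFc : IsClosed F := by rw [hF]; exact isClosed_iUnion_of_finite fun i => isClosed_closure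
  have hUi : ∀ᵐ s : ℝ, ¬ ∃ y, (⟨s,y⟩:ℂ) ∈ closure U ∧
      ∃ ε > 0, ∀ y', |y'-y| < ε → y' ≠ y → (⟨s,y'⟩:ℂ) ∉ closure U :=
    (countable_isolated hUo (rectProp_of_preconnected hUc)).ae_notMem volume
  have hAi := ae_all_iff.2 fun i => (hA i).isolated
  have hAf := ae_all_iff.2 fun i => (hA i).finite
  have hdU : Disjoint (interior F) (closure U) := by
    refine Disjoint.closure_right ?_ isOpen_interior
    rw [Set.disjoint_left]
    intro x hx hxU
    have : x ∈ U ∩ F := ⟨hxU, interior_subset hx⟩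
    rw [hUF] at this; exact this
  filter_upwards [hUi, hAi, hAf, hl] with s hsU hsA hsAf hsl y0
  have hfin : {y | (⟨s,y⟩:ℂ) ∈ frontier F ∪ l}.Finite := by
    refine ((Set.finite_iUnion hsAf).union hsl).subset ?_
    rintro y (h | h)
    · obtain ⟨i, hi⟩ := mem_iUnion.1 (frontier_F hF (fun i => (hA i).1) h)
      exact Or.inl (mem_iUnion.2 ⟨i, hi⟩)
    · exact Or.inr h
  obtain ⟨p, hp, hpT⟩ := side_L hfin y0
  obtain ⟨q, hq, hqT⟩ := side_R hfin y0
  have tl := side_type hFc hUo hfr (s := s) (isPreconnected_Ioo (a := p) (b := y0)) hpT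
  have tr := side_type hFc hUo hfr (s := s) (isPreconnected_Ioo (a := y0) (b := q)) hqT
  have el : ∀ {P : ℝ → Prop}, (∀ y ∈ Ioo p y0, P y) → ∀ᶠ y in 𝓝[<] y0, P y := fun h =>
    mem_of_superset (Ioo_mem_nhdsLT hp) h
  have er : ∀ {P : ℝ → Prop}, (∀ y ∈ Ioo y0 q, P y) → ∀ᶠ y in 𝓝[>] y0, P y := fun h =>
    mem_of_superset (Ioo_mem_nhdsGT hq) h
  have key : ((∀ y ∈ Ioo p y0, (⟨s,y⟩:ℂ) ∈ (F ∪ closure U)ᶜ) ∨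
      (∀ y ∈ Ioo y0 q, (⟨s,y⟩:ℂ) ∈ (F ∪ closure U)ᶜ)) →
      ((⟨s,y0⟩:ℂ) ∉ closure U ∨ (⟨s,y0⟩:ℂ) ∈ l) := by
    intro hW
    by_contra hcon
    push Not at hcon
    obtain ⟨hcl, hnl⟩ := hcon
    have hnU : (⟨s,y0⟩:ℂ) ∉ U := by
      intro hU
      have hnb : ∀ᶠ y in 𝓝 y0, (⟨s,y⟩:ℂ) ∈ U := (sl_cont s).continuousAt (hUo.mem_nhds hU)
      rcases hW with h | h
      · obtain ⟨y, h1, h2⟩ := ((el h).and (hnb.filter_mono nhdsWithin_le_nhds)).exists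
        exact h1 (Or.inr (subset_closure h2))
      · obtain ⟨y, h1, h2⟩ := ((er h).and (hnb.filter_mono nhdsWithin_le_nhds)).exists
        exact h1 (Or.inr (subset_closure h2))
    have hfrU : (⟨s,y0⟩:ℂ) ∈ frontier U := by
      rw [hUo.frontier_eq]; exact ⟨hcl, hnU⟩
    have hzF : (⟨s,y0⟩:ℂ) ∈ F := by
      rcases hfr hfrU with h | h
      · exact hFc.frontier_subset h
      · exact absurd h hnl
    rw [hF] at hzF
    obtain ⟨i, hi⟩ := mem_iUnion.1 hzF
    have hUsub : ∀ z ∈ U, z ∉ closure (A i) := fun z hz h => by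
      have : z ∈ U ∩ F := ⟨hz, by rw [hF]; exact mem_iUnion.2 ⟨i, h⟩⟩
      rw [hUF] at this; exact this
    have hWsub : ∀ z ∈ (F ∪ closure U)ᶜ, z ∉ closure (A i) := fun z hz h =>
      hz (Or.inl (by rw [hF]; exact mem_iUnion.2 ⟨i, h⟩))
    have hWsub' : ∀ z ∈ (F ∪ closure U)ᶜ, z ∉ closure U := fun z hz h => hz (Or.inr h)
    have hGsub : ∀ z ∈ interior F, z ∉ closure U := fun z hz h => hdU.le_bot ⟨hz, h⟩
    rcases hW with h | h
    · rcases tr with t | t | t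
      · exact hsA i ⟨y0, hi, isol_of_sides (el fun y hy => hWsub _ (h y hy))
          (er fun y hy => hUsub _ (t y hy))⟩
      · exact hsU ⟨y0, hcl, isol_of_sides (el fun y hy => hWsub' _ (h y hy))
          (er fun y hy => hGsub _ (t y hy))⟩
      · exact hsU ⟨y0, hcl, isol_of_sides (el fun y hy => hWsub' _ (h y hy))
          (er fun y hy => hWsub' _ (t y hy))⟩
    · rcases tl with t | t | t
      · exact hsA i ⟨y0, hi, isol_of_sides (el fun y hy => hUsub _ (t y hy))
          (er fun y hy => hWsub _ (h y hy))⟩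
      · exact hsU ⟨y0, hcl, isol_of_sides (el fun y hy => hGsub _ (t y hy))
          (er fun y hy => hWsub' _ (h y hy))⟩
      · exact hsU ⟨y0, hcl, isol_of_sides (el fun y hy => hWsub' _ (t y hy))
          (er fun y hy => hWsub' _ (h y hy))⟩
  constructor
  · rcases tl with t | t | t
    · exact Or.inl (el t)
    · exact Or.inr (Or.inl (el t))
    · exact Or.inr (Or.inr ⟨el t, key (Or.inl t)⟩)
  · rcases tr with t | t | t
    · exact Or.inl (er t)
    · exact Or.inr (Or.inl (er t))
    · exact Or.inr (Or.inr ⟨er t, key (Or.inr t)⟩)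

/-- global domination on a slice -/
lemma slice_dom {f η : ℝ → ℝ} {K Bl : Set ℝ} {V m : ℝ} (hBlo : IsOpen Bl) (hBlc : OrdConnected Bl)
    (hK : IsCompact K) (hKB : K ⊆ Bl) (hV : 0 ≤ V) (hm0 : 0 ≤ m)
    (hη : ContDiff ℝ 1 η) (hηK : ∀ y, y ∉ K → η y = 0) (hm : ∀ y, |η y| ≤ m)
    (bv : ∀ p q m : ℝ, p ≤ q → Icc p q ⊆ Bl → ∀ η : ℝ → ℝ, ContDiff ℝ 1 η →
      η p = 0 → η q = 0 → (∀ y ∈ Icc p q, |η y| ≤ m) →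
      |∫ y in p..q, f y * deriv η y| ≤ V * m) :
    |∫ y, f y * deriv η y| ≤ V * m := by
  have hd : ∀ y, y ∉ K → deriv η y = 0 := by
    intro y hy
    have e : η =ᶠ[𝓝 y] fun _ => 0 := by
      filter_upwards [hK.isClosed.isOpen_compl.mem_nhds hy] with y' hy' using hηK y' hy'
    rw [e.deriv_eq]; simp
  rcases K.eq_empty_or_nonempty with rfl | hne
  · have : ∀ y, f y * deriv η y = 0 := fun y => by rw [hd y (by simp), mul_zero]
    simp only [this, integral_zero, abs_zero]; positivity
  have ha := hK.sInf_mem hne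
  have hb := hK.sSup_mem hne
  have hlow : ∀ y ∈ K, sInf K ≤ y := fun y hy => csInf_le hK.bddBelow hy
  have hup : ∀ y ∈ K, y ≤ sSup K := fun y hy => le_csSup hK.bddAbove hy
  obtain ⟨e1, he1, h1⟩ := Metric.isOpen_iff.1 hBlo _ (hKB ha)
  obtain ⟨e2, he2, h2⟩ := Metric.isOpen_iff.1 hBlo _ (hKB hb)
  rw [Real.ball_eq_Ioo] at h1 h2
  set p := sInf K - e1 / 2
  set q := sSup K + e2 / 2
  have hp : p ∈ Bl := h1 ⟨by simp only [p]; linarith, by simp only [p]; linarith⟩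
  have hq : q ∈ Bl := h2 ⟨by simp only [q]; linarith, by simp only [q]; linarith⟩
  have hpq : p ≤ q := by
    simp only [p, q]; linarith [hup _ ha]
  have hpK : p ∉ K := fun h => by have := hlow p h; simp only [p] at this; linarith
  have hqK : q ∉ K := fun h => by have := hup q h; simp only [q] at this; linarith
  rw [← intervalIntegral.integral_eq_integral_of_support_subset (a := p) (b := q)]
  · exact bv p q m hpq (hBlc.out hp hq) η hη (hηK p hpK) (hηK q hqK) fun y _ => hm y
  · intro y hy
    have : y ∈ K := by
      by_contra hn
      exact hy (by simp only; rw [hd y hn, mul_zero])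
    exact ⟨by have := hlow y this; simp only [p]; linarith, by
      have := hup y this; simp only [q]; linarith⟩

theorem dir_limit {n : ℕ} {A : Fin n → Set ℂ} {F U l : Set ℂ} (hF : F = ⋃ i, closure (A i))
    (hA : ∀ i, LJ (A i)) (hUo : IsOpen U) (hUc : IsPreconnected U) (hUF : U ∩ F = ∅)
    (hfr : frontier U ⊆ frontier F ∪ l)
    {ψ : ℂ → ℝ} (hψ : Integrable ψ) (hψ0 : ∀ᵐ x, x ∈ F → ψ x = 0) {c : ℂ} {R M : ℝ}
    (hM : ∀ θ : ℂ → ℝ, ContDiff ℝ 1 θ → tsupport θ ⊆ Metric.ball c R → (∀ x, |θ x| ≤ 1) →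
      ∫ x, ψ x * fderiv ℝ θ x Complex.I ≤ M)
    {χ : ℕ → ℂ → ℝ} (hχ : ∀ k, ContDiff ℝ 1 (χ k)) (hχ1 : ∀ k, ∀ x ∈ closure U, χ k x = 1)
    (hχb : ∀ k x, 0 ≤ χ k x ∧ χ k x ≤ 1)
    (hχ0 : ∀ x, x ∉ closure U → ∃ N ∈ 𝓝 x, ∀ᶠ k in atTop, ∀ y ∈ N, χ k y = 0)
    {φ : ℂ → ℝ} (hφ : ContDiff ℝ 1 φ) (hφs : HasCompactSupport φ)
    (hφB : tsupport φ ⊆ Metric.ball c R)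
    (hl : ∀ᵐ s : ℝ, {y | (⟨s,y⟩:ℂ) ∈ l}.Finite ∧ ∀ y, (⟨s,y⟩:ℂ) ∈ l → φ ⟨s,y⟩ = 0) :
    Tendsto (fun k => ∫ x, ψ x * fderiv ℝ (fun x => χ k x * φ x) x Complex.I) atTop
      (𝓝 (∫ x, (closure U).indicator ψ x * fderiv ℝ φ x Complex.I)) := by
  obtain ⟨r1, hr1, hφr⟩ := exists_lt_subset_ball (isClosed_tsupport φ) hφB
  obtain ⟨V, hVi, hV0, hV⟩ := slice_bv hψ hM hr1
  have hχφ : ∀ k, ContDiff ℝ 1 fun x => χ k x * φ x := fun k => (hχ k).mul hφ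
  have hbd : ∀ {θ : ℂ → ℝ} {g : ℂ → ℝ}, Integrable g → ContDiff ℝ 1 θ → HasCompactSupport θ →
      Integrable fun x => g x * fderiv ℝ θ x Complex.I := by
    intro θ g hg hθ hs
    have hc : Continuous fun x => fderiv ℝ θ x Complex.I :=
      (hθ.continuous_fderiv one_ne_zero).clm_apply continuous_const
    obtain ⟨D, hD⟩ := (hs.fderiv_apply (𝕜 := ℝ) Complex.I).exists_bound_of_continuous hc
    exact hg.mul_bdd hc.aestronglyMeasurable (Eventually.of_forall hD)
  have hi1 := fun k => hbd hψ (hχφ k) hφs.mul_left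
  have hi2 := hbd (hψ.indicator isClosed_closure.measurableSet) hφ hφs (g := (closure U).indicator ψ)
  simp_rw [fun k => sl_integral (hi1 k)]
  rw [sl_integral hi2]
  obtain ⟨m, hm⟩ := hφs.exists_bound_of_continuous hφ.continuous
  have hm0 : 0 ≤ m := (norm_nonneg _).trans (hm 0)
  have dsl : ∀ {θ : ℂ → ℝ}, ContDiff ℝ 1 θ → ∀ s y : ℝ, fderiv ℝ θ ⟨s,y⟩ Complex.I =
      deriv (fun y => θ ⟨s,y⟩) y := fun hθ s y => (sl_comp_hasDeriv hθ s y).deriv.symm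
  have hslK : ∀ s : ℝ, IsCompact {y : ℝ | (⟨s,y⟩:ℂ) ∈ tsupport φ} := by
    intro s
    refine Metric.isCompact_of_isClosed_isBounded
      ((isClosed_tsupport φ).preimage (sl_cont s)) ?_
    refine (Metric.isBounded_ball (x := c.im) (r := r1)).subset fun y hy => ?_
    have h1 := hφr hy
    rw [Metric.mem_ball] at h1 ⊢
    refine lt_of_le_of_lt ?_ h1
    rw [Real.dist_eq, Complex.dist_eq]
    exact (Complex.abs_im_le_norm ((⟨s,y⟩:ℂ) - c))
  have hBlo : ∀ s : ℝ, IsOpen {y : ℝ | (⟨s,y⟩:ℂ) ∈ Metric.ball c r1} := fun s =>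
    Metric.isOpen_ball.preimage (sl_cont s)
  have hBlc : ∀ s : ℝ, OrdConnected {y : ℝ | (⟨s,y⟩:ℂ) ∈ Metric.ball c r1} := by
    intro s
    refine Convex.ordConnected fun x hx y hy a b ha hb hab => ?_
    have := convex_ball c r1 hx hy ha hb hab
    have e : a • (⟨s, x⟩ : ℂ) + b • (⟨s, y⟩ : ℂ) = ⟨s, a • x + b • y⟩ := by
      apply Complex.ext
      · simp [← add_mul, hab]
      · simp
    rw [e] at this
    exact this
  refine tendsto_integral_of_dominated_convergence (fun s => V s * m) ?_ (hVi.mul_const m) ?_ ?_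
  · exact fun k => (sl_integral_integrable (hi1 k)).aestronglyMeasurable
  · intro k
    filter_upwards [hV] with s hs
    simp_rw [dsl (hχφ k)]
    refine slice_dom (hBlo s) (hBlc s) (hslK s) (fun y hy => hφr hy) (hV0 s) hm0
      ((hχφ k).comp (sl_contDiff s)) (fun y hy => ?_) (fun y => ?_) hs
    · have : φ ⟨s,y⟩ = 0 := image_eq_zero_of_notMem_tsupport hy
      simp [this]
    · change |χ k ⟨s, y⟩ * φ ⟨s, y⟩| ≤ m
      rw [abs_mul, abs_of_nonneg (hχb k _).1]
      exact (mul_le_of_le_one_left (abs_nonneg _) (hχb k _).2).trans (hm _)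
  · filter_upwards [hV, sl_integrable hψ, sl_ae hψ0, hl,
      sides hF hA hUo hUc hUF hfr (hl.mono fun s h => h.1)] with s hsV hsi hs0 hsl hsd
    have H : OneD (fun y => ψ ⟨s,y⟩) (fun k y => χ k ⟨s,y⟩) (fun y => φ ⟨s,y⟩)
        {y | (⟨s,y⟩:ℂ) ∈ closure U} {y | (⟨s,y⟩:ℂ) ∈ U} {y | (⟨s,y⟩:ℂ) ∈ interior F}
        {y | (⟨s,y⟩:ℂ) ∈ (F ∪ closure U)ᶜ} {y | (⟨s,y⟩:ℂ) ∈ Metric.ball c r1} (V s) := by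
      have hts : tsupport (fun y => φ ⟨s,y⟩) ⊆ {y : ℝ | (⟨s,y⟩:ℂ) ∈ tsupport φ} := by
        refine closure_minimal (fun y hy => subset_closure hy) (hslK s).isClosed
      exact {
        fi := hsi
        χc := fun k => (hχ k).comp (sl_contDiff s)
        φc := hφ.comp (sl_contDiff s)
        φs := (hslK s).of_isClosed_subset (isClosed_tsupport _) hts
        Cc := isClosed_closure.preimage (sl_cont s)
        OC := fun y hy => subset_closure hy
        WC := by
          rw [Set.disjoint_left]
          exact fun y h1 h2 => h1 (Or.inr h2)
        χ1 := fun k y hy => hχ1 k _ hy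
        χb := fun k y => hχb k _
        χ0 := fun y hy => by
          obtain ⟨N, hN, h⟩ := hχ0 _ hy
          exact ⟨(fun y => (⟨s,y⟩:ℂ)) ⁻¹' N, (sl_cont s).continuousAt hN, h.mono fun k hk y' hy' =>
            hk _ hy'⟩
        f0 := hs0.mono fun y h hy => h (interior_subset hy)
        bv := fun p q m hpq hB => hsV p q m hpq hB
        Blo := hBlo s
        φBl := fun y hy => hφr (hts hy)
        V0 := hV0 s }
    have := H.main (fun y => ?_) (fun y => ?_)
    · simp_rw [dsl hφ, fun k => dsl (hχφ k)]
      exact this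
    · rcases (hsd y).1 with h | h | ⟨h, h'⟩
      · exact Or.inl h
      · exact Or.inr (Or.inl h)
      · exact Or.inr (Or.inr ⟨h, h'.imp id (hsl.2 y)⟩)
    · rcases (hsd y).2 with h | h | ⟨h, h'⟩
      · exact Or.inl h
      · exact Or.inr (Or.inl h)
      · exact Or.inr (Or.inr ⟨h, h'.imp id (hsl.2 y)⟩)

lemma lj_of (E : ℂ ≃ₗᵢ[ℝ] E2) {V : Set E2} (h : LipschitzJordanDomain V) : LJ (E ⁻¹' V) := by
  obtain ⟨h1, h2, γ, L, h3, h4, h5, h6⟩ := h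
  refine ⟨h1.preimage E.continuous, ?_, fun u => E.symm (γ u), L, ?_, ?_, ?_, ?_⟩
  · rw [show (E ⁻¹' V) = E.symm '' V from (E.symm.toEquiv.image_eq_preimage_symm V).symm]
    exact E.symm.lipschitz.isBounded_image h2
  · have := E.symm.lipschitz.comp h3
    rw [one_mul] at this; exact this
  · intro u; simp only [h4 u]
  · intro u hu v hv h; exact h5 hu hv (E.symm.injective h)
  · have : frontier (E ⁻¹' V) = E ⁻¹' frontier V := (E.toHomeomorph.preimage_frontier V).symm
    rw [this, ← h6]
    ext z
    simp only [mem_image, mem_preimage]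
    constructor
    · rintro ⟨u, hu, rfl⟩; exact ⟨u, hu, by simp⟩
    · rintro ⟨u, hu, h⟩; exact ⟨u, hu, by rw [h]; simp⟩

lemma E_fderiv (E : ℂ ≃ₗᵢ[ℝ] E2) (φ : E2 → ℝ) (x : ℂ) (v : ℂ) :
    fderiv ℝ (fun x => φ (E x)) x v = fderiv ℝ φ (E x) (E v) := by
  have := E.toContinuousLinearEquiv.comp_right_fderiv (f := φ) (x := x)
  have e : (φ ∘ ⇑E.toContinuousLinearEquiv) = fun x => φ (E x) := rfl
  rw [e] at this
  rw [this]; rfl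

lemma E_integral (E : ℂ ≃ₗᵢ[ℝ] E2) (f : E2 → ℝ) : ∫ x, f (E x) = ∫ x, f x :=
  E.measurePreserving.integral_comp E.toHomeomorph.measurableEmbedding f

theorem dir_limit_E2 (E : ℂ ≃ₗᵢ[ℝ] E2) {n : ℕ} {A : Fin n → Set E2} {F U l : Set E2}
    (hF : F = ⋃ i, closure (A i))
    (hA : ∀ i, LipschitzJordanDomain (A i)) (hUo : IsOpen U) (hUc : IsPreconnected U)
    (hUF : U ∩ F = ∅) (hfr : frontier U ⊆ frontier F ∪ l)
    {ψ : E2 → ℝ} (hψ : Integrable ψ) (hψ0 : ∀ᵐ x, x ∈ F → ψ x = 0) {c : E2} {R M : ℝ}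
    (hM : ∀ θ : E2 → ℝ, ContDiff ℝ 1 θ → tsupport θ ⊆ Metric.ball c R → (∀ x, |θ x| ≤ 1) →
      ∫ x, ψ x * fderiv ℝ θ x (E Complex.I) ≤ M)
    {χ : ℕ → E2 → ℝ} (hχ : ∀ k, ContDiff ℝ 1 (χ k)) (hχ1 : ∀ k, ∀ x ∈ closure U, χ k x = 1)
    (hχb : ∀ k x, 0 ≤ χ k x ∧ χ k x ≤ 1)
    (hχ0 : ∀ x, x ∉ closure U → ∃ N ∈ 𝓝 x, ∀ᶠ k in atTop, ∀ y ∈ N, χ k y = 0)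
    {φ : E2 → ℝ} (hφ : ContDiff ℝ 1 φ) (hφs : HasCompactSupport φ)
    (hφB : tsupport φ ⊆ Metric.ball c R)
    (hl : ∀ᵐ s : ℝ, {y : ℝ | E ⟨s,y⟩ ∈ l}.Finite ∧ ∀ y : ℝ, E ⟨s,y⟩ ∈ l → φ (E ⟨s,y⟩) = 0) :
    Tendsto (fun k => ∫ x, ψ x * fderiv ℝ (fun x => χ k x * φ x) x (E Complex.I)) atTop
      (𝓝 (∫ x, (closure U).indicator ψ x * fderiv ℝ φ x (E Complex.I))) := by
  have hcl : ∀ S : Set E2, closure (E ⁻¹' S) = E ⁻¹' closure S := fun S =>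
    (E.toHomeomorph.preimage_closure S).symm
  have hfrn : ∀ S : Set E2, frontier (E ⁻¹' S) = E ⁻¹' frontier S := fun S =>
    (E.toHomeomorph.preimage_frontier S).symm
  have hcd : ContDiff ℝ 1 E := E.toContinuousLinearEquiv.contDiff
  have hball : ∀ x, E x ∈ Metric.ball c R ↔ x ∈ Metric.ball (E.symm c) R := by
    intro x
    rw [Metric.mem_ball, Metric.mem_ball, ← E.dist_map x, E.apply_symm_apply]
  have hts : tsupport (fun x => φ (E x)) = E ⁻¹' tsupport φ := by
    rw [tsupport, tsupport, ← hcl]; rfl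
  have main := dir_limit (A := fun i => E ⁻¹' A i) (F := E ⁻¹' F) (U := E ⁻¹' U) (l := E ⁻¹' l)
    (by rw [hF]; simp [preimage_iUnion, hcl]) (fun i => lj_of E (hA i)) (hUo.preimage E.continuous)
    (by
      rw [show (E ⁻¹' U) = E.symm '' U from (E.symm.toEquiv.image_eq_preimage_symm U).symm]
      exact hUc.image _ E.symm.continuous.continuousOn)
    (by rw [← preimage_inter, hUF, preimage_empty])
    (by rw [hfrn, hfrn, ← preimage_union]; exact preimage_mono hfr)
    (ψ := fun x => ψ (E x))
    ((E.measurePreserving.integrable_comp_emb E.toHomeomorph.measurableEmbedding).2 hψ)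
    (E.measurePreserving.quasiMeasurePreserving.ae hψ0) (c := E.symm c) (R := R) (M := M)
    (fun θ h1 h2 h3 => by
      have := hM (fun x => θ (E.symm x)) (h1.comp E.symm.toContinuousLinearEquiv.contDiff) ?_
        (fun x => h3 _)
      · rw [← E_integral E] at this
        convert this using 3 with x
        rw [← E_fderiv]; simp
      · intro x hx
        have e : tsupport (fun x => θ (E.symm x)) = E.symm ⁻¹' tsupport θ := by
          rw [tsupport, tsupport]
          have := E.symm.toHomeomorph.preimage_closure (Function.support θ)
          exact this.symm
        rw [e] at hx
        have := h2 hx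
        rw [← hball] at this
        simpa using this)
    (χ := fun k x => χ k (E x)) (fun k => (hχ k).comp hcd)
    (fun k x hx => hχ1 k _ (by rw [hcl] at hx; exact hx)) (fun k x => hχb k _)
    (fun x hx => by
      rw [hcl] at hx
      obtain ⟨N, hN, h⟩ := hχ0 _ hx
      exact ⟨E ⁻¹' N, E.continuous.continuousAt hN, h.mono fun k hk y hy => hk _ hy⟩)
    (φ := fun x => φ (E x)) (hφ.comp hcd)
    (by
      rw [HasCompactSupport, hts]
      exact E.toHomeomorph.isCompact_preimage.2 hφs)
    (by
      rw [hts]; intro x hx; rw [← hball]; exact hφB hx)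
    hl
  rw [← E_integral E]
  simp_rw [← E_integral E (fun x => ψ x * fderiv ℝ (fun x => χ _ x * φ x) x (E Complex.I))]
  convert main using 3 with k k
  · congr 1; ext x
    rw [← E_fderiv E (fun x => χ k x * φ x)]
  · ext x
    rw [← E_fderiv E, hcl]; rfl

lemma null_frontier {n : ℕ} {A : Fin n → Set E2} {F : Set E2}
    (hF : F = ⋃ i, closure (A i)) (hA : ∀ i, LipschitzJordanDomain (A i)) :
    volume (frontier F) = 0 := by
  let E : ℂ ≃ₗᵢ[ℝ] E2 := Complex.isometryOfOrthonormal (EuclideanSpace.basisFun (Fin 2) ℝ)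
  have hm : MeasurableSet (frontier F) := isClosed_frontier.measurableSet
  rw [← E.measurePreserving.measure_preimage hm.nullMeasurableSet]
  refine sl_null (E.continuous.measurable hm) ?_
  filter_upwards [ae_all_iff.2 fun i => (lj_of E (hA i)).finite] with s hs
  refine Set.Finite.measure_zero ((Set.finite_iUnion hs).subset ?_) _
  intro y hy
  have hfrn : ∀ S : Set E2, frontier (E ⁻¹' S) = E ⁻¹' frontier S := fun S =>
    (E.toHomeomorph.preimage_frontier S).symm
  have hcl : ∀ S : Set E2, closure (E ⁻¹' S) = E ⁻¹' closure S := fun S =>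
    (E.toHomeomorph.preimage_closure S).symm
  have h1 : (⟨s, y⟩ : ℂ) ∈ frontier (E ⁻¹' F) := by rw [hfrn]; exact hy
  obtain ⟨i, hi⟩ := mem_iUnion.1 (frontier_F (A := fun i => E ⁻¹' A i)
    (by rw [hF]; simp [preimage_iUnion, hcl]) (fun i => (lj_of E (hA i)).1) h1)
  exact mem_iUnion.2 ⟨i, hi⟩

lemma diver_basis (v : OrthonormalBasis (Fin 2) ℝ E2) {g : E2 → E2} {x : E2}
    (hg : DifferentiableAt ℝ g x) :
    diver g x = fderiv ℝ (fun x => inner ℝ (v 0) (g x)) x (v 0) +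
      fderiv ℝ (fun x => inner ℝ (v 1) (g x)) x (v 1) := by
  have h : ∀ i, fderiv ℝ (fun x => inner ℝ (v i) (g x)) x (v i) =
      inner ℝ (v i) (fderiv ℝ g x (v i)) := by
    intro i
    have := ((innerSL ℝ (v i)).hasFDerivAt (x := g x)).comp x hg.hasFDerivAt
    have e : (⇑(innerSL ℝ (v i)) ∘ g) = fun x => inner ℝ (v i) (g x) := by
      ext y; simp
    rw [e] at this
    rw [this.fderiv]; simp
  rw [h, h, diver, LinearMap.trace_eq_sum_inner _ v, Fin.sum_univ_two]
  rfl

lemma diver_cont {g : E2 → E2} (hg : ContDiff ℝ 1 g) : Continuous (diver g) := by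
  have e : diver g = fun x => fderiv ℝ
      (fun x => inner ℝ (EuclideanSpace.basisFun (Fin 2) ℝ 0) (g x)) x
        (EuclideanSpace.basisFun (Fin 2) ℝ 0) + fderiv ℝ
      (fun x => inner ℝ (EuclideanSpace.basisFun (Fin 2) ℝ 1) (g x)) x
        (EuclideanSpace.basisFun (Fin 2) ℝ 1) := by
    ext x; exact diver_basis _ (hg.differentiable one_ne_zero x)
  rw [e]
  have h : ∀ i, Continuous fun x => fderiv ℝ
      (fun x => inner ℝ (EuclideanSpace.basisFun (Fin 2) ℝ i) (g x)) x
        (EuclideanSpace.basisFun (Fin 2) ℝ i) := fun i =>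
    ((contDiff_const.inner ℝ hg).continuous_fderiv one_ne_zero).clm_apply continuous_const
  exact (h 0).add (h 1)

lemma diver_zero {g : E2 → E2} {x : E2} (hx : x ∉ tsupport g) : diver g x = 0 := by
  have : fderiv ℝ g x = 0 := by
    have e : g =ᶠ[𝓝 x] fun _ => 0 := notMem_tsupport_iff_eventuallyEq.1 hx
    rw [e.fderiv_eq]; simp
  rw [diver, this]; simp

lemma cpt_of {V : Type*} [Zero V] [TopologicalSpace V] {g : E2 → V} {c : E2} {R : ℝ}
    (h : tsupport g ⊆ Metric.ball c R) : HasCompactSupport g :=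
  Metric.isCompact_of_isClosed_isBounded (isClosed_tsupport g) (Metric.isBounded_ball.subset h)

lemma diver_cs {g : E2 → E2} (h : HasCompactSupport g) : HasCompactSupport (diver g) :=
  HasCompactSupport.intro h fun _ hx => diver_zero hx

lemma mul_diver_int {g : E2 → E2} (hg : ContDiff ℝ 1 g) (hs : HasCompactSupport g)
    {ψ : E2 → ℝ} (hψ : Integrable ψ) : Integrable fun x => ψ x * diver g x := by
  obtain ⟨D, hD⟩ := (diver_cs hs).exists_bound_of_continuous (diver_cont hg)
  exact hψ.mul_bdd (diver_cont hg).aestronglyMeasurable (Eventually.of_forall hD)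

lemma I_global {c : E2} {R : ℝ} {g : E2 → E2} {h : E2 → ℝ} (hg : ContDiff ℝ 1 g)
    (hh : ContDiff ℝ 1 h) (hgs : tsupport g ⊆ Metric.ball c R) (hhs : tsupport h ⊆ Metric.ball c R)
    {ψ : E2 → ℝ} (hψ : Integrable ψ) :
    ∫ x in Metric.ball c R, (ψ x * diver g x + h x) = (∫ x, ψ x * diver g x) + ∫ x, h x := by
  rw [setIntegral_eq_integral_of_forall_compl_eq_zero]
  · exact integral_add (mul_diver_int hg (cpt_of hgs) hψ)
      (hh.continuous.integrable_of_hasCompactSupport (cpt_of hhs))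
  · intro x hx
    rw [diver_zero fun h => hx (hgs h), image_eq_zero_of_notMem_tsupport fun h => hx (hhs h)]
    simp

lemma ra_le {c : E2} {R : ℝ} {ψ : E2 → ℝ} (hψ : Integrable ψ)
    (hfin : relaxedArea (Metric.ball c R) ψ ≠ ∞) {g : E2 → E2} {h : E2 → ℝ} (hg : ContDiff ℝ 1 g)
    (hh : ContDiff ℝ 1 h) (hgs : tsupport g ⊆ Metric.ball c R) (hhs : tsupport h ⊆ Metric.ball c R)
    (hb : ∀ x, ‖g x‖ ^ 2 + h x ^ 2 ≤ 1) :
    (∫ x, ψ x * diver g x) + ∫ x, h x ≤ (relaxedArea (Metric.ball c R) ψ).toReal := by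
  have h1 : ENNReal.ofReal (∫ x in Metric.ball c R, (ψ x * diver g x + h x)) ≤
      relaxedArea (Metric.ball c R) ψ := by
    unfold relaxedArea
    exact le_iSup_of_le g <| le_iSup_of_le h <| le_iSup_of_le hg <| le_iSup_of_le hh <|
      le_iSup_of_le hgs <| le_iSup_of_le hhs <| le_iSup_of_le hb le_rfl
  rw [I_global hg hh hgs hhs hψ] at h1
  exact (ENNReal.ofReal_le_iff_le_toReal hfin).1 h1

lemma ra_dir {c : E2} {R : ℝ} {ψ : E2 → ℝ} (hψ : Integrable ψ)
    (hfin : relaxedArea (Metric.ball c R) ψ ≠ ∞) (v : OrthonormalBasis (Fin 2) ℝ E2) (j : Fin 2)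
    (θ : E2 → ℝ) (hθ : ContDiff ℝ 1 θ) (hs : tsupport θ ⊆ Metric.ball c R) (hb : ∀ x, |θ x| ≤ 1) :
    ∫ x, ψ x * fderiv ℝ θ x (v j) ≤ (relaxedArea (Metric.ball c R) ψ).toReal := by
  have hg : ContDiff ℝ 1 fun x => θ x • v j := hθ.smul contDiff_const
  have := ra_le hψ hfin (g := fun x => θ x • v j) (h := fun _ => 0) hg contDiff_const
    ((tsupport_smul_subset_left θ _).trans hs) (by simp [tsupport]) (fun x => by
      rw [norm_smul, v.norm_eq_one, mul_one, Real.norm_eq_abs]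
      have := hb x
      have h0 := abs_nonneg (θ x)
      nlinarith)
  have e : ∀ x, diver (fun x => θ x • v j) x = fderiv ℝ θ x (v j) := by
    intro x
    rw [diver_basis v (hg.differentiable one_ne_zero x)]
    simp only [inner_smul_right, v.inner_eq_ite]
    fin_cases j <;> simp
  simp_rw [e] at this
  simpa using this

/-- sequence of cutoffs -/
lemma exists_chi {K : Set E2} (hK : IsClosed K) (hne : K.Nonempty) :
    ∃ χ : ℕ → E2 → ℝ, (∀ k, ContDiff ℝ 1 (χ k)) ∧ (∀ k, ∀ x ∈ K, χ k x = 1) ∧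
    (∀ k x, 0 ≤ χ k x ∧ χ k x ≤ 1) ∧
    (∀ x, x ∉ K → ∃ N ∈ 𝓝 x, ∀ᶠ k in atTop, ∀ y ∈ N, χ k y = 0) := by
  have : ∀ k : ℕ, ∃ κ : E2 → ℝ, ContDiff ℝ 2 κ ∧
      (∀ x ∈ {x | 1 / ((k:ℝ) + 1) ≤ Metric.infDist x K}, κ x = 0) ∧ (∀ x ∈ K, κ x = 1) ∧
      ∀ x, 0 ≤ κ x ∧ κ x ≤ 1 := by
    intro k
    refine exists_cutoff (isClosed_le continuous_const (Metric.continuous_infDist_pt K)) hK ?_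
    rw [Set.disjoint_left]
    intro x hx hxK
    have h0 : Metric.infDist x K = 0 := Metric.infDist_zero_of_mem hxK
    simp only [mem_setOf_eq, h0] at hx
    have : (0:ℝ) < 1 / ((k:ℝ) + 1) := by positivity
    linarith
  choose χ h1 h2 h3 h4 using this
  refine ⟨χ, fun k => (h1 k).of_le (by norm_num), h3, h4, fun x hx => ?_⟩
  have hd : 0 < Metric.infDist x K := (hK.notMem_iff_infDist_pos hne).1 hx
  refine ⟨{y | Metric.infDist x K / 2 < Metric.infDist y K},
    (isOpen_lt continuous_const (Metric.continuous_infDist_pt K)).mem_nhds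
      (by simp only [mem_setOf_eq]; linarith), ?_⟩
  have := (tendsto_one_div_add_atTop_nhds_zero_nat (𝕜 := ℝ)).eventually_lt_const (half_pos hd)
  filter_upwards [this] with k hk y hy
  exact h2 k y (hk.le.trans (le_of_lt hy))

lemma iso_apply (v : OrthonormalBasis (Fin 2) ℝ E2) (s y : ℝ) :
    Complex.isometryOfOrthonormal v ⟨s, y⟩ = s • v 0 + y • v 1 := by
  simp only [Complex.isometryOfOrthonormal, Complex.orthonormalBasisOneI,
    LinearIsometryEquiv.trans_apply]
  rw [← OrthonormalBasis.sum_repr_symm, Fin.sum_univ_two]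
  simp [Complex.coe_basisOneI_repr]

lemma iso_I (v : OrthonormalBasis (Fin 2) ℝ E2) :
    Complex.isometryOfOrthonormal v Complex.I = v 1 := by
  have := iso_apply v 0 1
  rw [zero_smul, one_smul, zero_add] at this
  exact this

lemma vec_limit (v : OrthonormalBasis (Fin 2) ℝ E2) {n : ℕ} {A : Fin n → Set E2} {F U : Set E2}
    (hF : F = ⋃ i, closure (A i))
    (hA : ∀ i, LipschitzJordanDomain (A i)) (hUo : IsOpen U) (hUc : IsPreconnected U)
    (hUF : U ∩ F = ∅) {t : ℝ} (hfr : ∀ x ∈ frontier U, x ∈ frontier F ∨ inner ℝ (v 1) x = t)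
    {ψ : E2 → ℝ} (hψ : Integrable ψ) (hψ0 : ∀ᵐ x, x ∈ F → ψ x = 0) {c : E2} {R : ℝ}
    (hfin : relaxedArea (Metric.ball c R) ψ ≠ ∞)
    {χ : ℕ → E2 → ℝ} (hχ : ∀ k, ContDiff ℝ 1 (χ k)) (hχ1 : ∀ k, ∀ x ∈ closure U, χ k x = 1)
    (hχb : ∀ k x, 0 ≤ χ k x ∧ χ k x ≤ 1)
    (hχ0 : ∀ x, x ∉ closure U → ∃ N ∈ 𝓝 x, ∀ᶠ k in atTop, ∀ y ∈ N, χ k y = 0)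
    {Φ : E2 → E2} (hΦ : ContDiff ℝ 1 Φ) (hΦB : tsupport Φ ⊆ Metric.ball c R)
    (hΦl : ∀ x ∈ closure U, inner ℝ (v 1) x = t → inner ℝ (v 1) (Φ x) = 0) :
    Tendsto (fun k => ∫ x, ψ x * diver (fun x => χ k x • Φ x) x) atTop
      (𝓝 (∫ x, (closure U).indicator ψ x * diver Φ x)) := by
  have hts : ∀ i, tsupport (fun x => inner ℝ (v i) (Φ x)) ⊆ tsupport Φ := fun i =>
    closure_mono fun x hx => by
      simp only [Function.mem_support] at hx ⊢
      intro h; rw [h] at hx; simp at hx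
  have hc : ∀ i, ContDiff ℝ 1 (fun x => inner ℝ (v i) (Φ x)) := fun i =>
    contDiff_const.inner ℝ hΦ
  have hfr' : frontier U ⊆ frontier F ∪ {x | x ∈ closure U ∧ inner ℝ (v 1) x = t} := by
    intro x hx
    rcases hfr x hx with h | h
    · exact Or.inl h
    · exact Or.inr ⟨frontier_subset_closure hx, h⟩
  have v10 : inner ℝ (v 1) (v 0) = 0 := by rw [v.inner_eq_ite]; simp
  have v11 : inner ℝ (v 1) (v 1) = (1:ℝ) := by rw [v.inner_eq_ite]; simp
  -- normal direction
  have h1 := dir_limit_E2 (Complex.isometryOfOrthonormal v) hF hA hUo hUc hUF hfr' hψ hψ0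
    (M := (relaxedArea (Metric.ball c R) ψ).toReal)
    (fun θ h1 h2 h3 => by rw [iso_I]; exact ra_dir hψ hfin v 1 θ h1 h2 h3)
    hχ hχ1 hχb hχ0 (hc 1) (cpt_of ((hts 1).trans hΦB)) ((hts 1).trans hΦB) (by
      refine Eventually.of_forall fun s => ⟨?_, ?_⟩
      · refine (Set.finite_singleton t).subset ?_
        rintro y ⟨_, hy⟩
        rw [iso_apply, inner_add_right, inner_smul_right, inner_smul_right, v10, v11] at hy
        simpa using hy
      · rintro y ⟨hy1, hy2⟩
        exact hΦl _ hy1 hy2)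
  rw [iso_I] at h1
  -- tangential direction
  let w := v.reindex (Equiv.swap 0 1)
  have w0 : w 0 = v 1 := by simp [w]
  have w1 : w 1 = v 0 := by simp [w]
  have h2 := dir_limit_E2 (Complex.isometryOfOrthonormal w) hF hA hUo hUc hUF hfr' hψ hψ0
    (M := (relaxedArea (Metric.ball c R) ψ).toReal)
    (fun θ h1 h2 h3 => by rw [iso_I, w1]; exact ra_dir hψ hfin v 0 θ h1 h2 h3)
    hχ hχ1 hχb hχ0 (hc 0) (cpt_of ((hts 0).trans hΦB)) ((hts 0).trans hΦB) (by
      have : ∀ᵐ s : ℝ, s ≠ t := by simp [ae_iff]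
      filter_upwards [this] with s hs
      have : ∀ y : ℝ, ¬ (Complex.isometryOfOrthonormal w ⟨s,y⟩ ∈
          {x | x ∈ closure U ∧ inner ℝ (v 1) x = t}) := by
        rintro y ⟨_, hy⟩
        rw [iso_apply, inner_add_right, inner_smul_right, inner_smul_right, w0, w1, v10, v11] at hy
        exact hs (by simpa using hy)
      refine ⟨?_, fun y hy => absurd hy (this y)⟩
      convert Set.finite_empty (α := ℝ)
      ext y; simpa using this y)
  rw [iso_I, w1] at h2
  have hIntg : ∀ (i : Fin 2) (θ : E2 → ℝ) (η : E2 → ℝ), Integrable η → ContDiff ℝ 1 θ →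
      HasCompactSupport θ → Integrable fun x => η x * fderiv ℝ θ x (v i) := by
    intro i θ η hη hθ hs
    have hcont : Continuous fun x => fderiv ℝ θ x (v i) :=
      (hθ.continuous_fderiv one_ne_zero).clm_apply continuous_const
    obtain ⟨D, hD⟩ := (hs.fderiv_apply ℝ (v i)).exists_bound_of_continuous hcont
    exact hη.mul_bdd hcont.aestronglyMeasurable (Eventually.of_forall hD)
  have h3 := h2.add h1
  have hci : Integrable ((closure U).indicator ψ) := hψ.indicator isClosed_closure.measurableSet
  convert h3 using 2 with k
  · rw [← integral_add]
    · congr 1; ext x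
      have hd : ContDiff ℝ 1 fun x => χ k x • Φ x := (hχ k).smul hΦ
      rw [diver_basis v (hd.differentiable one_ne_zero x), mul_add]
      simp only [inner_smul_right]
    · exact hIntg 0 _ ψ hψ ((hχ k).mul (hc 0)) (cpt_of ((hts 0).trans hΦB)).mul_left
    · exact hIntg 1 _ ψ hψ ((hχ k).mul (hc 1)) (cpt_of ((hts 1).trans hΦB)).mul_left
  · rw [← integral_add]
    · congr 1; ext x
      rw [diver_basis v (hΦ.differentiable one_ne_zero x), mul_add]
    · exact hIntg 0 _ _ hci (hc 0) (cpt_of ((hts 0).trans hΦB))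
    · exact hIntg 1 _ _ hci (hc 1) (cpt_of ((hts 1).trans hΦB))

lemma chi_lim {K : Set E2} {χ : ℕ → E2 → ℝ} (hχ1 : ∀ k, ∀ x ∈ K, χ k x = 1)
    (hχ0 : ∀ x, x ∉ K → ∃ N ∈ 𝓝 x, ∀ᶠ k in atTop, ∀ y ∈ N, χ k y = 0) (x : E2) :
    Tendsto (fun k => χ k x) atTop (𝓝 (K.indicator (fun _ => 1) x)) := by
  by_cases hx : x ∈ K
  · rw [indicator_of_mem hx]
    simp only [hχ1 _ x hx]; exact tendsto_const_nhds
  · rw [indicator_of_notMem hx]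
    obtain ⟨N, hN, h⟩ := hχ0 x hx
    refine tendsto_const_nhds.congr' ?_
    filter_upwards [h] with k hk
    exact (hk x (mem_of_mem_nhds hN)).symm

/-- The auxiliary field: constant in the direction `n`, divergence free near `K`. -/
lemma exists_G (v : OrthonormalBasis (Fin 2) ℝ E2) {c : E2} {R : ℝ} {K : Set E2}
    (hK : IsCompact K) (hKB : K ⊆ Metric.ball c R) (hKne : K.Nonempty) (t : ℝ) {g : E2 → E2}
    (hg : ContDiff ℝ 1 g) (hgb : ∀ x, ‖g x‖ ≤ 1) :
    ∃ G : E2 → E2, ContDiff ℝ 1 G ∧ tsupport G ⊆ Metric.ball c R ∧ (∀ x, ‖G x‖ ≤ 1) ∧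
      (∀ x ∈ K, diver G x = 0) ∧
      (∀ x ∈ K, inner ℝ (v 1) x = t → inner ℝ (v 1) (G x) = inner ℝ (v 1) (g x)) := by
  obtain ⟨r, hrR, hr⟩ := exists_lt_subset_ball hK.isClosed hKB
  obtain ⟨κ, hκ, hκ0, hκ1, hκb⟩ := exists_cutoff (s := (Metric.ball c ((r+R)/2))ᶜ)
    (t := Metric.closedBall c r) Metric.isOpen_ball.isClosed_compl Metric.isClosed_closedBall (by
      rw [Set.disjoint_left]
      intro x hx hx2
      simp only [mem_compl_iff, Metric.mem_ball, Metric.mem_closedBall, not_lt] at hx hx2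
      linarith)
  have v01 : inner ℝ (v 0) (v 1) = (0:ℝ) := by rw [v.inner_eq_ite]; simp
  have v11 : inner ℝ (v 1) (v 1) = (1:ℝ) := by rw [v.inner_eq_ite]; simp
  let p : E2 → E2 := fun x => x - (inner ℝ (v 1) x - t) • v 1
  have hp : ContDiff ℝ 1 p := contDiff_id.sub
    (((contDiff_const.inner ℝ contDiff_id).sub contDiff_const).smul contDiff_const)
  let f : E2 → ℝ := fun x => inner ℝ (v 1) (g (p x))
  have hf : ContDiff ℝ 1 f := contDiff_const.inner ℝ (hg.comp hp)
  have hfb : ∀ x, |f x| ≤ 1 := fun x => by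
    have := abs_real_inner_le_norm (v 1) (g (p x))
    rw [v.norm_eq_one, one_mul] at this
    exact this.trans (hgb _)
  have hκc : ContDiff ℝ 1 κ := hκ.of_le (by norm_num)
  have hGc : ContDiff ℝ 1 fun x => κ x • (f x • v 1) := hκc.smul (hf.smul contDiff_const)
  refine ⟨fun x => κ x • (f x • v 1), hGc, ?_, ?_, ?_, ?_⟩
  · refine (tsupport_smul_subset_left κ _).trans ?_
    have : Function.support κ ⊆ Metric.closedBall c ((r+R)/2) := by
      intro x hx
      by_contra h
      exact hx (hκ0 x fun h' => h (Metric.ball_subset_closedBall h'))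
    refine (closure_minimal this Metric.isClosed_closedBall).trans ?_
    exact Metric.closedBall_subset_ball (by linarith)
  · intro x
    rw [norm_smul, norm_smul, v.norm_eq_one, mul_one, Real.norm_eq_abs, Real.norm_eq_abs,
      abs_of_nonneg (hκb x).1]
    exact mul_le_one₀ (hκb x).2 (abs_nonneg _) (hfb x)
  · intro x hx
    rw [diver_basis v (hGc.differentiable one_ne_zero x)]
    simp only [inner_smul_right, v01, v11, mul_zero, mul_one]
    have e : (fun x => κ x * f x) =ᶠ[𝓝 x] f := by
      filter_upwards [Metric.isOpen_ball.mem_nhds (hr hx)] with y hy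
      rw [hκ1 y (Metric.ball_subset_closedBall hy), one_mul]
    rw [e.fderiv_eq]
    have h1 : fderiv ℝ f x (v 1) = 0 := by
      rw [← (hf.differentiable one_ne_zero x).lineDeriv_eq_fderiv, lineDeriv]
      have : (fun s : ℝ => f (x + s • v 1)) = fun _ => f x := by
        ext s
        have : p (x + s • v 1) = p x := by
          simp only [p, inner_add_right, inner_smul_right, v11]
          module
        simp only [f, this]
      rw [this]; simp
    rw [h1]; simp
  · intro x hx hxt
    simp only [inner_smul_right, v11, mul_one]
    rw [hκ1 x (Metric.ball_subset_closedBall (hr hx)), one_mul]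
    have : p x = x := by simp only [p, hxt]; simp
    simp only [f, this]

lemma admissible_ineq {s a b h : ℝ} (hs : 0 ≤ s ∧ s ≤ 1) (ha : 0 ≤ a) (hb : b ≤ 1)
    (hb0 : 0 ≤ b) (hah : a^2 + h^2 ≤ 1) : ((1-s)*a+s*b)^2 + ((1-s)*h)^2 ≤ 1 := by
  have ha1 : a ≤ 1 := by nlinarith [sq_nonneg h]
  have h1 : 0 ≤ 1 - s := by linarith [hs.2]
  have h2 : ((1-s)*a+s*b)^2 ≤ ((1-s)*a+s)^2 := by
    have : s * b ≤ s := by nlinarith [hs.1]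
    have : 0 ≤ s * b := mul_nonneg hs.1 hb0
    have : 0 ≤ (1-s)*a := mul_nonneg h1 ha
    gcongr; 
  have h3 : (1-s)^2*(a^2+h^2) ≤ (1-s)^2 := by nlinarith [sq_nonneg (1-s)]
  have h4 : s*(1-s)*a ≤ s*(1-s) := by nlinarith [mul_nonneg hs.1 h1]
  nlinarith

lemma core {n : ℕ} {A : Fin n → Set E2} {F U : Set E2}
    (hF : F = ⋃ i, closure (A i))
    (hA : ∀ i, LipschitzJordanDomain (A i)) (hUo : IsOpen U) (hUc : IsPreconnected U)
    (hUne : U.Nonempty)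
    (hUF : U ∩ F = ∅) {c : E2} {R : ℝ} (hUB : closure U ⊆ Metric.ball c R)
    {m : E2} (hm : ‖m‖ = 1) {t : ℝ}
    (hfr : ∀ x ∈ frontier U, x ∈ frontier F ∨ inner ℝ m x = t)
    {ψ : E2 → ℝ} (hψ : Integrable ψ) (hψ0 : ∀ᵐ x, x ∈ F → ψ x = 0) :
    relaxedArea (Metric.ball c R) (Uᶜ.indicator ψ) ≤
      relaxedArea (Metric.ball c R) ψ + volume U := by
  by_cases hfin : relaxedArea (Metric.ball c R) ψ = ∞
  · rw [hfin]; simp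
  obtain ⟨v, rfl⟩ : ∃ v : OrthonormalBasis (Fin 2) ℝ E2, v 1 = m := by
    have ho : Orthonormal ℝ (({1} : Set (Fin 2)).restrict fun _ => m) := by
      refine ⟨fun i => hm, fun i j hij => absurd (Subsingleton.elim i j) hij⟩
    obtain ⟨v, hv⟩ := ho.exists_orthonormalBasis_extension_of_card_eq
      (v := fun _ : Fin 2 => m) (s := {1}) (by simp)
    exact ⟨v, hv 1 rfl⟩
  have hUbd : IsBounded U := Metric.isBounded_ball.subset (subset_closure.trans hUB)
  have hKc : IsCompact (closure U) := hUbd.isCompact_closure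
  have hvU : volume U ≠ ∞ := hUbd.measure_lt_top.ne
  -- the frontier is null
  have hnull : volume (frontier U) = 0 := by
    refine measure_mono_null (t := frontier F ∪ {x | inner ℝ (v 1) x = t}) (fun x hx => hfr x hx) ?_
    refine measure_union_null (null_frontier hF hA) ?_
    let W : AffineSubspace ℝ E2 := AffineSubspace.mk' (t • v 1) (LinearMap.ker (innerSL ℝ (v 1)).toLinearMap)
    have hW : {x | inner ℝ (v 1) x = t} ⊆ (W : Set E2) := by
      intro x hx
      simp only [mem_setOf_eq] at hx
      simp only [W, SetLike.mem_coe, AffineSubspace.mem_mk', vsub_eq_sub, LinearMap.mem_ker]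
      simp [inner_sub_right, inner_smul_right, hx]
    refine measure_mono_null hW (Measure.addHaar_affineSubspace _ _ ?_)
    intro h
    have h2 : (t+1) • v 1 ∈ W := h ▸ AffineSubspace.mem_top ℝ E2 _
    simp only [W, AffineSubspace.mem_mk', vsub_eq_sub, LinearMap.mem_ker] at h2
    simp [inner_sub_right, inner_smul_right] at h2
  have hae : (closure U : Set E2) =ᵐ[volume] U := by
    rw [hUo.frontier_eq] at hnull
    exact ae_eq_set.2 ⟨hnull, by rw [sdiff_eq_empty.2 subset_closure]; exact measure_empty⟩
  obtain ⟨χ, hχ, hχ1, hχb, hχ0⟩ := exists_chi isClosed_closure hUne.closure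
  conv_lhs => unfold relaxedArea
  refine iSup_le fun g => iSup_le fun h => iSup_le fun hg => iSup_le fun hh => iSup_le fun hgs =>
    iSup_le fun hhs => iSup_le fun hb => ?_
  rw [I_global hg hh hgs hhs (hψ.indicator hUo.measurableSet.compl)]
  have hgb : ∀ x, ‖g x‖ ≤ 1 := fun x => by nlinarith [hb x, sq_nonneg (h x), norm_nonneg (g x)]
  have hhb : ∀ x, |h x| ≤ 1 := fun x => by
    rw [← sq_le_one_iff_abs_le_one]; nlinarith [hb x, sq_nonneg ‖g x‖]
  obtain ⟨G, hG, hGs, hGb, hGd, hGl⟩ := exists_G v hKc hUB hUne.closure t hg hgb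
  have hΦ : ContDiff ℝ 1 (fun x => G x - g x) := hG.sub hg
  have hΦs : tsupport (fun x => G x - g x) ⊆ Metric.ball c R := 
    (tsupport_sub G g).trans (union_subset hGs hgs)
  have lim1 := vec_limit v hF hA hUo hUc hUF hfr hψ hψ0 hfin hχ hχ1 hχb hχ0 hΦ hΦs
    (fun x hx hxt => by rw [inner_sub_right, hGl x hx hxt, sub_self])
  have hhi : Integrable h := hh.continuous.integrable_of_hasCompactSupport (cpt_of hhs)
  have lim2 : Tendsto (fun k => ∫ x, (1 - χ k x) * h x) atTop
      (𝓝 (∫ x, (1 - (closure U).indicator (fun _ => 1) x) * h x)) := by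
    refine tendsto_integral_of_dominated_convergence (fun x => |h x|) ?_ hhi.abs ?_ ?_
    · intro k
      exact ((continuous_const.sub (hχ k).continuous).mul hh.continuous).aestronglyMeasurable
    · intro k
      refine Eventually.of_forall fun x => ?_
      rw [norm_mul, Real.norm_eq_abs, Real.norm_eq_abs]
      refine mul_le_of_le_one_left (abs_nonneg _) ?_
      rw [abs_le]; constructor <;> linarith [(hχb k x).1, (hχb k x).2]
    · refine Eventually.of_forall fun x => ?_
      exact (tendsto_const_nhds.sub (chi_lim hχ1 hχ0 x)).mul tendsto_const_nhds
  have hle : ∀ k, (∫ x, ψ x * diver g x) + (∫ x, ψ x * diver (fun x => χ k x • (G x - g x)) x) +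
      ∫ x, (1 - χ k x) * h x ≤ (relaxedArea (Metric.ball c R) ψ).toReal := by
    intro k
    have hc1 : ContDiff ℝ 1 (fun x => χ k x • (G x - g x)) := (hχ k).smul hΦ
    have hs1 : tsupport (fun x => χ k x • (G x - g x)) ⊆ Metric.ball c R :=
      (tsupport_smul_subset_right (χ k) _).trans hΦs
    have hc2 : ContDiff ℝ 1 (fun x => g x + χ k x • (G x - g x)) := hg.add hc1
    have hs2 : tsupport (fun x => g x + χ k x • (G x - g x)) ⊆ Metric.ball c R :=
      (tsupport_add g _).trans (union_subset hgs hs1)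
    have hc3 : ContDiff ℝ 1 (fun x => (1 - χ k x) * h x) := (contDiff_const.sub (hχ k)).mul hh
    have hs3 : tsupport (fun x => (1 - χ k x) * h x) ⊆ Metric.ball c R :=
      (tsupport_mul_subset_right).trans hhs
    have := ra_le hψ hfin hc2 hc3 hs2 hs3 (fun x => by
      refine le_trans ?_ (admissible_ineq (hχb k x) (norm_nonneg (g x)) (hGb x)
        (norm_nonneg _) (hb x))
      gcongr
      have e : g x + χ k x • (G x - g x) = (1 - χ k x) • g x + χ k x • G x := by module
      rw [e]
      refine (norm_add_le _ _).trans ?_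
      rw [norm_smul, norm_smul, Real.norm_eq_abs, Real.norm_eq_abs, abs_of_nonneg (hχb k x).1,
        abs_of_nonneg (by linarith [(hχb k x).2])])
    have e : ∀ x, ψ x * diver (fun x => g x + χ k x • (G x - g x)) x =
        ψ x * diver g x + ψ x * diver (fun x => χ k x • (G x - g x)) x := by
      intro x
      rw [← mul_add]; congr 1
      have : fderiv ℝ (fun x => g x + χ k x • (G x - g x)) x =
          fderiv ℝ g x + fderiv ℝ (fun x => χ k x • (G x - g x)) x :=
        fderiv_add (hg.differentiable one_ne_zero x) (hc1.differentiable one_ne_zero x)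
      simp only [diver, this]
      simp
    simp_rw [e] at this
    rwa [integral_add (mul_diver_int hg (cpt_of hgs) hψ) (mul_diver_int hc1 (cpt_of hs1) hψ)]
      at this
  have hlim := le_of_tendsto' ((tendsto_const_nhds.add lim1).add lim2) hle
  have i1 : ∫ x, (closure U).indicator ψ x * diver (fun x => G x - g x) x =
      - ∫ x, (closure U).indicator ψ x * diver g x := by
    rw [← integral_neg]; congr 1; ext x
    by_cases hx : x ∈ closure U
    · have : fderiv ℝ (fun x => G x - g x) x = fderiv ℝ G x - fderiv ℝ g x :=
        fderiv_sub (hG.differentiable one_ne_zero x) (hg.differentiable one_ne_zero x)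
      have h2 : diver (fun x => G x - g x) x = diver G x - diver g x := by
        simp only [diver, this]; simp
      rw [h2, hGd x hx]; ring
    · simp [hx]
  have i2 : ∫ x, Uᶜ.indicator ψ x * diver g x = (∫ x, ψ x * diver g x) -
      ∫ x, (closure U).indicator ψ x * diver g x := by
    rw [← integral_sub (mul_diver_int hg (cpt_of hgs) hψ)
      (mul_diver_int hg (cpt_of hgs) (hψ.indicator isClosed_closure.measurableSet))]
    refine integral_congr_ae ?_
    filter_upwards [hae.mem_iff] with x hx
    by_cases hxU : x ∈ U
    · simp [hxU, hx.2 hxU]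
    · have : x ∉ closure U := fun h => hxU (hx.1 h)
      simp [hxU, this]
  have i3 : ∫ x, h x ≤ (∫ x, (1 - (closure U).indicator (fun _ => 1) x) * h x) +
      (volume U).toReal := by
    have h1 : ∫ x, (1 - (closure U).indicator (fun _ => (1:ℝ)) x) * h x =
        (∫ x, h x) - ∫ x in closure U, h x := by
      rw [← integral_indicator isClosed_closure.measurableSet,
        ← integral_sub hhi (hhi.indicator isClosed_closure.measurableSet)]
      congr 1; ext x
      by_cases hx : x ∈ closure U <;> simp [hx]
    rw [h1]
    have h2 : ‖∫ x in closure U, h x‖ ≤ 1 * (volume (closure U)).toReal :=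
      norm_setIntegral_le_of_norm_le_const hKc.measure_lt_top fun x _ => hhb x
    rw [one_mul, measure_congr hae] at h2
    have := (abs_le.1 h2).2
    linarith
  have hfinal : (∫ x, Uᶜ.indicator ψ x * diver g x) + ∫ x, h x ≤
      (relaxedArea (Metric.ball c R) ψ + volume U).toReal := by
    rw [ENNReal.toReal_add hfin hvU]
    rw [i1] at hlim
    rw [i2]
    linarith
  exact (ENNReal.ofReal_le_iff_le_toReal (ENNReal.add_ne_top.2 ⟨hfin, hvU⟩)).2 hfinal

lemma ra_ge {c : E2} {R : ℝ} {ψ : E2 → ℝ} (hψ : Integrable ψ)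
    {g : E2 → E2} {h : E2 → ℝ} (hg : ContDiff ℝ 1 g)
    (hh : ContDiff ℝ 1 h) (hgs : tsupport g ⊆ Metric.ball c R) (hhs : tsupport h ⊆ Metric.ball c R)
    (hb : ∀ x, ‖g x‖ ^ 2 + h x ^ 2 ≤ 1) :
    ENNReal.ofReal ((∫ x, ψ x * diver g x) + ∫ x, h x) ≤ relaxedArea (Metric.ball c R) ψ := by
  rw [← I_global hg hh hgs hhs hψ]
  unfold relaxedArea
  exact le_iSup_of_le g <| le_iSup_of_le h <| le_iSup_of_le hg <| le_iSup_of_le hh <|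
      le_iSup_of_le hgs <| le_iSup_of_le hhs <| le_iSup_of_le hb le_rfl

lemma core2 {n : ℕ} {A : Fin n → Set E2} {F U : Set E2}
    (hF : F = ⋃ i, closure (A i))
    (hA : ∀ i, LipschitzJordanDomain (A i)) (hUo : IsOpen U)
    (hUF : U ∩ F = ∅) {c : E2} {R : ℝ} (hUB : closure U ⊆ Metric.ball c R)
    {m : E2} (hm : ‖m‖ = 1) {t : ℝ}
    (hfr : ∀ x ∈ frontier U, x ∈ frontier F ∨ inner ℝ m x = t)
    {ψ : E2 → ℝ} (hψ : Integrable ψ) (hψ0 : ∀ᵐ x, x ∈ F → ψ x = 0) :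
    relaxedArea (Metric.ball c R) (Uᶜ.indicator ψ) ≤
      relaxedArea (Metric.ball c R) ψ + volume U := by
  let d : ℕ → E2 := TopologicalSpace.denseSeq E2
  let C : ℕ → Set E2 := fun j => connectedComponentIn U (d j)
  have hCo : ∀ j, IsOpen (C j) := fun j => hUo.connectedComponentIn
  have hCU : ∀ j, C j ⊆ U := fun j => connectedComponentIn_subset U _
  have hcov : ∀ x ∈ U, ∃ j, x ∈ C j := by
    intro x hx
    obtain ⟨y, hy, j, rfl⟩ := (TopologicalSpace.denseRange_denseSeq E2).inter_open_nonempty _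
      (hUo.connectedComponentIn (x := x)) ⟨x, mem_connectedComponentIn hx⟩
    refine ⟨j, ?_⟩
    have := connectedComponentIn_eq hy
    show x ∈ connectedComponentIn U (TopologicalSpace.denseSeq E2 j)
    rw [← this]
    exact mem_connectedComponentIn hx
  have hCfr : ∀ j, frontier (C j) ⊆ frontier U := by
    intro j x hx
    rw [(hCo j).frontier_eq] at hx
    rw [hUo.frontier_eq]
    refine ⟨closure_mono (hCU j) hx.1, fun hxU => hx.2 ?_⟩
    obtain ⟨y, hy1, hy2⟩ := mem_closure_iff.1 hx.1 _ (hUo.connectedComponentIn (x := x))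
      (mem_connectedComponentIn hxU)
    have e1 := connectedComponentIn_eq hy1
    have e2 := connectedComponentIn_eq hy2
    show x ∈ connectedComponentIn U (d j)
    rw [e2, ← e1]
    exact mem_connectedComponentIn hxU
  let V : ℕ → Set E2 := fun N => ⋃ j ∈ Finset.range N, C j
  have hVo : ∀ N, IsOpen (V N) := fun N => isOpen_biUnion fun j _ => hCo j
  have hVU : ∀ N, V N ⊆ U := fun N => iUnion₂_subset fun j _ => hCU j
  have hVs : ∀ N, V (N+1) = V N ∪ C N := by
    intro N
    simp only [V]
    rw [Finset.range_add_one, Finset.set_biUnion_insert, union_comm]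
  have hind : ∀ N, relaxedArea (Metric.ball c R) ((V N)ᶜ.indicator ψ) ≤
      relaxedArea (Metric.ball c R) ψ + volume (V N) := by
    intro N
    induction N with
    | zero => simp [V]
    | succ N ih =>
      by_cases hsub : C N ⊆ V N
      · have : V (N+1) = V N := by rw [hVs, union_eq_left.2 hsub]
        rw [this]; exact ih
      · have hdisj : Disjoint (V N) (C N) := by
          rw [Set.disjoint_left]
          intro y hy hyN
          simp only [V, mem_iUnion] at hy
          obtain ⟨j, hj, hyj⟩ := hy
          apply hsub
          have e1 := connectedComponentIn_eq hyN
          have e2 := connectedComponentIn_eq hyj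
          have : C N = C j := by simp only [C]; rw [e1, e2]
          rw [this]
          exact subset_biUnion_of_mem (u := C) hj
        have hne : (C N).Nonempty := by
          rw [nonempty_iff_ne_empty]; intro h; exact hsub (h ▸ empty_subset _)
        have := core hF hA (hCo N) isPreconnected_connectedComponentIn hne
          (eq_empty_of_subset_empty (hUF ▸ inter_subset_inter_left F (hCU N)))
          ((closure_mono (hCU N)).trans hUB) hm (fun x hx => hfr x (hCfr N hx))
          (hψ.indicator (hVo N).measurableSet.compl) (by
            filter_upwards [hψ0] with x hx hxF
            exact indicator_apply_eq_zero.2 fun _ => hx hxF)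
        rw [indicator_indicator, ← compl_union, union_comm, ← hVs] at this
        refine this.trans ?_
        rw [hVs, measure_union hdisj (hCo N).measurableSet, ← add_assoc]
        gcongr
  conv_lhs => unfold relaxedArea
  refine iSup_le fun g => iSup_le fun h => iSup_le fun hg => iSup_le fun hh => iSup_le fun hgs =>
    iSup_le fun hhs => iSup_le fun hb => ?_
  rw [I_global hg hh hgs hhs (hψ.indicator hUo.measurableSet.compl)]
  have hIntg := mul_diver_int hg (cpt_of hgs) hψ
  have lim : Tendsto (fun N => ∫ x, (V N)ᶜ.indicator ψ x * diver g x) atTop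
      (𝓝 (∫ x, Uᶜ.indicator ψ x * diver g x)) := by
    refine tendsto_integral_of_dominated_convergence (fun x => ‖ψ x * diver g x‖) ?_ hIntg.norm ?_ ?_
    · intro N
      exact (mul_diver_int hg (cpt_of hgs)
        (hψ.indicator (hVo N).measurableSet.compl)).aestronglyMeasurable
    · intro N
      refine Eventually.of_forall fun x => ?_
      rw [norm_mul, norm_mul]
      gcongr
      exact norm_indicator_le_norm_self _ _
    · refine Eventually.of_forall fun x => ?_
      refine tendsto_const_nhds.congr' ?_
      by_cases hx : x ∈ U
      · obtain ⟨j, hj⟩ := hcov x hx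
        filter_upwards [eventually_gt_atTop j] with N hN
        have : x ∈ V N := mem_biUnion (by simpa using hN) hj
        simp [hx, this]
      · refine Eventually.of_forall fun N => ?_
        have : x ∉ V N := fun h => hx (hVU N h)
        simp [hx, this]
  refine le_of_tendsto' ((ENNReal.continuous_ofReal.tendsto _).comp
    (lim.add_const (∫ x, h x))) fun N => ?_
  refine (ra_ge (hψ.indicator (hVo N).measurableSet.compl) hg hh hgs hhs hb).trans ?_
  refine (hind N).trans ?_
  gcongr
  exact hVU N

lemma ra_congr {c : E2} {R : ℝ} {ψ ψ' : E2 → ℝ} (h : ∀ x ∈ Metric.ball c R, ψ x = ψ' x) :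
    relaxedArea (Metric.ball c R) ψ = relaxedArea (Metric.ball c R) ψ' := by
  have e : ∀ (g : E2 → E2) (k : E2 → ℝ), ∫ x in Metric.ball c R, (ψ x * diver g x + k x) =
      ∫ x in Metric.ball c R, (ψ' x * diver g x + k x) := fun g k => by
    have hm : MeasurableSet (Metric.ball c R) := Metric.isOpen_ball.measurableSet
    refine setIntegral_congr_fun hm fun x hx => ?_
    simp only [h x hx]
  unfold relaxedArea
  simp only [e]

lemma support_line {H : Set E2} (hH : Convex ℝ H) (hne : (interior H).Nonempty) {a b : E2}
    (ha : a ∈ H) (hb : b ∈ H) (hl : segment ℝ a b ⊆ frontier H) :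
    ∃ m : E2, ‖m‖ = 1 ∧ ∃ t : ℝ, ∀ x ∈ segment ℝ a b, inner ℝ m x = t := by
  have hz : midpoint ℝ a b ∉ interior H := (hl (midpoint_mem_segment a b)).2
  obtain ⟨f, hf⟩ := geometric_hahn_banach_open_point hH.interior isOpen_interior hz
  have hle : ∀ x ∈ H, f x ≤ f (midpoint ℝ a b) := by
    intro x hx
    have hx2 : x ∈ closure (interior H) := by
      rw [hH.closure_interior_eq_closure_of_nonempty_interior hne]; exact subset_closure hx
    exact closure_minimal (fun y hy => (hf y hy).le)
      (isClosed_le f.continuous continuous_const) hx2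
  have hmid : f (midpoint ℝ a b) = (f a + f b) / 2 := by
    rw [midpoint_eq_smul_add, map_smul, map_add]; simp; ring
  have h1 := hle a ha
  have h2 := hle b hb
  have hab : f a = f b := by linarith
  obtain ⟨w, hw⟩ := (InnerProductSpace.toDual ℝ E2).surjective f
  have hfw : ∀ x, f x = inner ℝ w x := fun x => by rw [← hw]; simp
  have hw0 : w ≠ 0 := by
    rintro rfl
    obtain ⟨y, hy⟩ := hne
    have := hf y hy
    simp [hfw] at this
  refine ⟨‖w‖⁻¹ • w, norm_smul_inv_norm hw0, ‖w‖⁻¹ * f a, ?_⟩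
  rintro x ⟨p, q, hp, hq, hpq, rfl⟩
  rw [real_inner_smul_left, ← hfw, map_add, map_smul, map_smul, ← hab, smul_eq_mul, smul_eq_mul,
    ← add_mul, hpq, one_mul]

/-- Reduction of energy, base case: let `F₁ ⊆ closure Ω` be the closure of a
piecewise Lipschitz set, `ψ ∈ BV(B)` with `ψ = 0` a.e. on `F₁`, `l = [a,b]` a
segment of `∂(conv F₁) \ ∂F₁`, and `U` the open region enclosed between `∂F₁`
and `l`. Setting `ψ' = 0` on `U` and `ψ' = ψ` elsewhere, one has
`𝒜(ψ'; B) − |F₁ ∪ Ū| ≤ 𝒜(ψ; B) − |F₁|`. -/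
theorem stmt_19 (Ω : Set E2) (hΩo : IsOpen Ω) (hΩb : IsBounded Ω) (hΩc : Convex ℝ Ω)
    (c : E2) (R : ℝ) (hB : closure Ω ⊆ Metric.ball c R)
    (F₁ : Set E2) (hF₁c : IsClosed F₁) (hF₁sub : F₁ ⊆ closure Ω) (hF₁ne : F₁.Nonempty)
    (hF₁pl : ∃ S, PiecewiseLipschitz S ∧ F₁ = closure S)
    (ψ : E2 → ℝ) (hψint : IntegrableOn ψ (Metric.ball c R))
    (hψ0 : ∀ᵐ x ∂(volume : Measure E2), x ∈ F₁ → ψ x = 0)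
    (a b : E2) (hab : a ≠ b)
    (ha : a ∈ frontier F₁) (hb : b ∈ frontier F₁)
    (hl : segment ℝ a b ⊆ frontier (convexHull ℝ F₁))
    (hl2 : (segment ℝ a b \ {a, b}) ∩ frontier F₁ = ∅)
    (U : Set E2) (hUo : IsOpen U) (hUne : U.Nonempty)
    (hUsub : U ⊆ convexHull ℝ F₁) (hUF : U ∩ F₁ = ∅)
    (hUfr : frontier U ⊆ frontier F₁ ∪ segment ℝ a b) :
    relaxedArea (Metric.ball c R) (Set.indicator Uᶜ ψ) + volume F₁ ≤
      relaxedArea (Metric.ball c R) ψ + volume (F₁ ∪ closure U) := by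
  obtain ⟨S, ⟨n, A, hA, hS⟩, hFS⟩ := hF₁pl
  have hF : F₁ = ⋃ i, closure (A i) := by
    rw [hFS, hS, closure_iUnion_of_finite]
  have hbs : IsBounded F₁ := hΩb.closure.subset hF₁sub
  have hHsub : convexHull ℝ F₁ ⊆ closure Ω := convexHull_min hF₁sub hΩc.closure
  have hUB : closure U ⊆ Metric.ball c R :=
    (closure_minimal (hUsub.trans hHsub) isClosed_closure).trans hB
  have hFH : F₁ ⊆ convexHull ℝ F₁ := subset_convexHull ℝ F₁
  obtain ⟨m, hm, t, ht⟩ := support_line (convex_convexHull ℝ F₁)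
    (hUne.mono (interior_maximal hUsub hUo)) (hFH (hF₁c.frontier_subset ha))
    (hFH (hF₁c.frontier_subset hb)) hl
  have hfr : ∀ x ∈ frontier U, x ∈ frontier F₁ ∨ inner ℝ m x = t := by
    intro x hx
    rcases hUfr hx with h | h
    · exact Or.inl h
    · exact Or.inr (ht x h)
  have hmB : MeasurableSet (Metric.ball c R) := Metric.isOpen_ball.measurableSet
  have key := core2 hF hA hUo hUF hUB hm hfr (ψ := (Metric.ball c R).indicator ψ)
    (hψint.integrable_indicator hmB) (by
      filter_upwards [hψ0] with x hx hxF
      exact indicator_apply_eq_zero.2 fun _ => hx hxF)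
  rw [ra_congr (ψ := (Metric.ball c R).indicator ψ) (ψ' := ψ) (fun x hx => by simp [hx]),
    ra_congr (ψ := Uᶜ.indicator ((Metric.ball c R).indicator ψ)) (ψ' := Uᶜ.indicator ψ)
      (fun x hx => by by_cases h : x ∈ U <;> simp [hx, h])] at key
  calc _ ≤ relaxedArea (Metric.ball c R) ψ + volume U + volume F₁ := by gcongr
    _ = relaxedArea (Metric.ball c R) ψ + volume (F₁ ∪ U) := by
      rw [measure_union (by rw [disjoint_iff_inter_eq_empty, inter_comm]; exact hUF)
        hUo.measurableSet, add_assoc, add_comm (volume U)]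
    _ ≤ _ := by
      gcongr
      exact subset_closure
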